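/- arXiv:1106.3653 — 3 statements merged into one kernel-verified Lean document; each statement's English description precedes it below -/
import Mathlib

section
/- For every odd positive integer t, the decreasing pattern J_t = t(t−1)⋯21 and the pattern F_t = (t−1)(t−2)⋯21 t are even-shape-Wilf-equivalent: eav_λ(J_t) = eav_λ(F_t) for every Young diagram λ. -/
/-!
The proof localizes the transformation of Backelin, West and Xin, one row at a time, and keeps
track of signs. Write `t = s + 1`. A decreasing pattern `J_t` in the diagram lies in the largest
rectangle having as top row the row `b` of its first point (`JIn`), and an occurrence of `F_t`
amounts to a decreasing chain of `s` points to the lower left of the point in some row `b`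
(`FIn`). For `0 ≤ m ≤ n` consider the even transversals having no `J_t` in a rectangle with top
row `b < m` and no `F_t` ending in a row `b ≥ m` (`Mixed`); for `m = 0` they are the avoiders
of `F_t`, and for `m = n` those of `J_t`. It suffices that their number does not change from `m`
to `m + 1`. With `a` the row `m`, only the condition at row `a` changes, so it is enough
to match the transversals of `Base` having a `J_t` at row `a` with those having an `F_t` at row
`a` (`card_row`).

Among the `J_t` in the rectangle of row `a` there is a least one: the points of rank `j` in such
chains increase in both coordinates, because no chain of length `t + 1` exists, and the leftmost
points of each rank form a chain (`exists_minChain`). It starts in row `a`. Replacing it by a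
copy of `F_t` in the same rows and columns multiplies the permutation by a `t`-cycle, which is
even as `t` is odd. By leftmostness the replacement creates neither an `F_t` ending above row
`a` (`Link.forward_F`) nor a `J_t` below it (`Link.forward_J`); both rest on the exchange
argument `MinChain.key`. The inverse replaces the greatest `s`-chain to the lower left of the
point in row `a`, together with that point, by a decreasing chain. Rotated by 180 degrees
a greatest chain is a least one, so the same exchange argument applies (`Link.backward_F`,
`Link.backward_J`). Finally `Link.forward_min` and `Link.backward_min` show that the least chain
before the replacement and the greatest chain after it determine each other, so that the two
maps are mutually inverse.
-/

/-- A transversal `π` of the Young diagram with row lengths `lam` (row `v`, 0-indexed, has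
`lam v` cells) contains the pattern `σ` if some strictly increasing choice of columns carries
an order-isomorphic copy of `σ` whose rows and columns all lie in a full `k × k` square of
cells of the diagram: every cell `(row π (f b), column f a)` belongs to the diagram. -/
def TransversalContains {n k : ℕ} (lam : Fin n → ℕ) (σ : Equiv.Perm (Fin k))
    (π : Equiv.Perm (Fin n)) : Prop :=
  ∃ f : Fin k → Fin n, StrictMono f ∧ (∀ a b : Fin k, π (f a) < π (f b) ↔ σ a < σ b) ∧
    ∀ a b : Fin k, (f a : ℕ) + 1 ≤ lam (π (f b))

/-- `π` is a transversal of the Young diagram with row lengths `lam`: the point of each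
value `v` lies in a cell of row `v`, i.e. `π⁻¹(v) ≤ λ_v` (1-indexed). -/
def IsTransversal {n : ℕ} (lam : Fin n → ℕ) (π : Equiv.Perm (Fin n)) : Prop :=
  ∀ v : Fin n, (π.symm v : ℕ) + 1 ≤ lam v

/-- The number of even transversals of the Young diagram `lam` avoiding `σ`. -/
noncomputable def eavShape {n k : ℕ} (lam : Fin n → ℕ) (σ : Equiv.Perm (Fin k)) : ℕ :=
  Nat.card {π : Equiv.Perm (Fin n) //
    IsTransversal lam π ∧ Equiv.Perm.sign π = 1 ∧ ¬ TransversalContains lam σ π}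

/-- The number of all transversals of the Young diagram `lam` avoiding `σ`. -/
noncomputable def savShape {n k : ℕ} (lam : Fin n → ℕ) (σ : Equiv.Perm (Fin k)) : ℕ :=
  Nat.card {π : Equiv.Perm (Fin n) //
    IsTransversal lam π ∧ ¬ TransversalContains lam σ π}

/-- Even-shape-Wilf-equivalence: equal counts of even avoiding transversals for every
Young diagram (an antitone sequence of row lengths). -/
def EvenShapeWilfEquiv {k : ℕ} (σ τ : Equiv.Perm (Fin k)) : Prop :=
  ∀ (n : ℕ) (lam : Fin n → ℕ), Antitone lam → eavShape lam σ = eavShape lam τ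

/-- Shape-Wilf-equivalence: equal counts of avoiding transversals for every Young diagram. -/
def ShapeWilfEquiv {k : ℕ} (σ τ : Equiv.Perm (Fin k)) : Prop :=
  ∀ (n : ℕ) (lam : Fin n → ℕ), Antitone lam → savShape lam σ = savShape lam τ

/-- `J_t = t(t-1)⋯21`, the decreasing permutation of length `t` (0-indexed: `i ↦ t-1-i`). -/
def Jpat (t : ℕ) : Equiv.Perm (Fin t) := Fin.revPerm

/-- `F_t = (t-1)(t-2)⋯21t` (0-indexed: `i ↦ t-2-i` for `i+1 < t`, and `t-1 ↦ t-1`). -/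
def Fpat (t : ℕ) : Equiv.Perm (Fin t) where
  toFun i := if (i : ℕ) + 1 = t then i else ⟨t - 2 - (i : ℕ), by have := i.isLt; omega⟩
  invFun i := if (i : ℕ) + 1 = t then i else ⟨t - 2 - (i : ℕ), by have := i.isLt; omega⟩
  left_inv i := by
    have hi := i.isLt
    by_cases h : (i : ℕ) + 1 = t
    · simp [h]
    · have h2 : ¬ ((⟨t - 2 - (i : ℕ), by omega⟩ : Fin t) : ℕ) + 1 = t := by simp; omega
      simp only [if_neg h, if_neg h2]
      ext
      simp
      omega
  right_inv i := by
    have hi := i.isLt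
    by_cases h : (i : ℕ) + 1 = t
    · simp [h]
    · have h2 : ¬ ((⟨t - 2 - (i : ℕ), by omega⟩ : Fin t) : ℕ) + 1 = t := by simp; omega
      simp only [if_neg h, if_neg h2]
      ext
      simp
      omega

/-! ### Chains and leftmost chains -/

/-- `Ch r K k c`: there is an `r`-chain of exactly `k ≥ 1` points of `K` ending at `c`.
Chains starting at `c` are `Ch (flip r) K k c`. -/
inductive Ch {α : Type*} (r : α → α → Prop) (K : α → Prop) : ℕ → α → Prop
  | one {c : α} : K c → Ch r K 1 c
  | succ {k : ℕ} {c d : α} : Ch r K k c → r c d → K d → Ch r K (k + 1) d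

namespace Ch

variable {α β : Type*} {r r' : α → α → Prop} {K P : α → Prop}

lemma mem {k : ℕ} {c : α} (h : Ch r K k c) : K c := by
  cases h <;> assumption

lemma pos {k : ℕ} {c : α} (h : Ch r K k c) : 0 < k := by
  cases h <;> omega

lemma inv {k : ℕ} {d : α} (h : Ch r K (k + 2) d) : ∃ c, Ch r K (k + 1) c ∧ r c d := by
  cases h with
  | succ h1 h2 _ => exact ⟨_, h1, h2⟩

lemma map {s : β → β → Prop} {Q : β → Prop} (f : α → β)
    (hr : ∀ c d, K c → K d → r c d → s (f c) (f d)) (hK : ∀ c, K c → Q (f c))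
    {k : ℕ} {c : α} (h : Ch r K k c) : Ch s Q k (f c) := by
  induction h with
  | one h => exact .one (hK _ h)
  | succ h1 h2 h3 ih => exact .succ ih (hr _ _ h1.mem h3 h2) (hK _ h3)

lemma mono (hK : ∀ c, K c → P c) {k : ℕ} {c : α} (h : Ch r K k c) : Ch r P k c :=
  h.map id (fun _ _ _ _ h => h) hK

lemma join {j : ℕ} {d : α} (h : Ch (flip r) K j d) :
    ∀ {i : ℕ} {c : α}, Ch r K i c → r c d → ∃ e, Ch r K (i + j) e := by
  induction h with
  | one h => intro i c hc hr; exact ⟨_, .succ hc hr h⟩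
  | @succ k e d h1 h2 h3 ih =>
    intro i c hc hr
    obtain ⟨e, he⟩ := ih (.succ hc hr h3) h2
    exact ⟨e, by rwa [show i + (k + 1) = i + 1 + k by omega]⟩

lemma rev {j : ℕ} {d : α} (h : Ch (flip r) K j d) : ∃ e, Ch r K j e := by
  cases h with
  | one h => exact ⟨_, .one h⟩
  | @succ k e d h1 h2 h3 =>
    obtain ⟨e, he⟩ := h1.join (.one h3) h2
    exact ⟨e, by rwa [show k + 1 = 1 + k by omega]⟩

lemma of_seq {x : ℕ → α} {N : ℕ} (hK : ∀ i < N, K (x i))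
    (hr : ∀ i, i + 1 < N → r (x i) (x (i + 1))) : ∀ j < N, Ch r K (j + 1) (x j)
  | 0, h => .one (hK 0 h)
  | j + 1, h => .succ (of_seq hK hr j (by omega)) (hr j h) (hK _ h)

lemma of_seq_flip {x : ℕ → α} {N : ℕ} (hK : ∀ i < N, K (x i))
    (hr : ∀ i, i + 1 < N → r (x i) (x (i + 1))) (j : ℕ) (hj : j < N) :
    Ch (flip r) K (N - j) (x j) := by
  have := of_seq (r := flip r) (x := fun i => x (N - 1 - i)) (N := N) (K := K)
    (fun i hi => hK _ (by omega)) (fun i hi => by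
      have := hr (N - 1 - (i + 1)) (by omega)
      rwa [show N - 1 - (i + 1) + 1 = N - 1 - i by omega] at this) (N - 1 - j) (by omega)
  rwa [show N - 1 - j + 1 = N - j by omega, show N - 1 - (N - 1 - j) = j by omega] at this

lemma to_seq {k : ℕ} {c : α} (h : Ch r K k c) : ∃ f : ℕ → α, f (k - 1) = c ∧
    (∀ i < k, K (f i)) ∧ ∀ i, i + 1 < k → r (f i) (f (i + 1)) := by
  induction h with
  | @one c h => exact ⟨fun _ => c, rfl, fun _ _ => h, fun i hi => by omega⟩
  | @succ k c d h1 h2 h3 ih =>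
    obtain ⟨f, hf, hK, hr⟩ := ih
    have := h1.pos
    refine ⟨fun i => if i < k then f i else d, by simp, fun i hi => ?_, fun i hi => ?_⟩
    · by_cases h : i < k
      · simpa [h] using hK i h
      · simpa [h] using h3
    · by_cases h : i + 1 < k
      · simpa [h, show i < k by omega] using hr i h
      · have : i = k - 1 := by omega
        subst this
        simpa [h, show k - 1 < k by omega, hf] using h2

/-- A chain of length `k` through its points: each rank is occupied. -/
lemma exists_rank {k : ℕ} {c : α} (h : Ch r K k c) : ∀ {l : ℕ}, Ch (flip r) K (l + 1) c →
    ∀ i < k, ∃ d, Ch r K (i + 1) d ∧ Ch (flip r) K (k + l - i) d := by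
  induction h with
  | one h =>
    intro l hl i hi
    obtain rfl : i = 0 := by omega
    exact ⟨_, .one h, by rwa [show 1 + l - 0 = l + 1 by omega]⟩
  | @succ k c d h1 h2 h3 ih =>
    intro l hl i hi
    by_cases h : i = k
    · subst h
      exact ⟨d, .succ h1 h2 h3, by rwa [show i + 1 + l - i = l + 1 by omega]⟩
    · have := ih (l := l + 1) (.succ hl h2 h1.mem) i (by omega)
      rwa [show k + 1 + l - i = k + (l + 1) - i by omega]

end Ch

/-- Points of `α` carry coordinates `X`, `Y`, and `r c d` means that `d` is strictly to the right
of and below `c`. The sequence `x 0, …, x (N - 1)` is the least `N`-chain in `K`: `x j` is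
minimal, in both coordinates, among the points having rank `j` in some `N`-chain. -/
structure MinChain {α : Type*} (X Y : α → ℤ) (r : α → α → Prop) (K : α → Prop) (N : ℕ)
    (x : ℕ → α) : Prop where
  g : ∀ j < N, Ch r K (j + 1) (x j)
  e : ∀ j < N, Ch (flip r) K (N - j) (x j)
  minX : ∀ j < N, ∀ c, Ch r K (j + 1) c → Ch (flip r) K (N - j) c → X (x j) ≤ X c
  minY : ∀ j < N, ∀ c, Ch r K (j + 1) c → Ch (flip r) K (N - j) c → Y (x j) ≤ Y c
  step : ∀ j, j + 1 < N → r (x j) (x (j + 1))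

section
variable {α : Type*} {X Y Y' : α → ℤ} {r r' : α → α → Prop} {K P : α → Prop} {N : ℕ} {x : ℕ → α}

/-- If `K` has no `(N+1)`-chain, the points of a given rank increase in both coordinates. -/
lemma rank_lt (hr : ∀ c d, r c d ↔ X c < X d ∧ Y d < Y c) (hY : Function.Injective Y)
    (hN : ∀ c, ¬ Ch r K (N + 1) c) {j : ℕ} (hj : j < N) {c d : α} (hc : Ch r K (j + 1) c)
    (hd : Ch (flip r) K (N - j) d) (h : X c < X d) : Y c < Y d := by
  rcases lt_trichotomy (Y c) (Y d) with h1 | h1 | h1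
  · exact h1
  · exact absurd (congrArg X (hY h1)) h.ne
  · obtain ⟨e, he⟩ := hd.join hc ((hr _ _).2 ⟨h, h1⟩)
    rw [show j + 1 + (N - j) = N + 1 by omega] at he
    exact absurd he (hN e)

lemma exists_minChain [Finite α] (hr : ∀ c d, r c d ↔ X c < X d ∧ Y d < Y c)
    (hX : Function.Injective X) (hY : Function.Injective Y)
    (hN : ∀ c, ¬ Ch r K (N + 1) c) (hne : ∃ c, Ch r K N c) : ∃ x, MinChain X Y r K N x := by
  obtain ⟨c₀, hc₀⟩ := hne
  have H : ∀ j, ∃ c, j < N → (Ch r K (j + 1) c ∧ Ch (flip r) K (N - j) c) ∧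
      ∀ d, (Ch r K (j + 1) d ∧ Ch (flip r) K (N - j) d) → X c ≤ X d := by
    intro j
    by_cases hj : j < N
    · obtain ⟨d, hd⟩ := hc₀.exists_rank (l := 0) (.one hc₀.mem) j hj
      obtain ⟨c, h1, h2⟩ := Set.exists_min_image
        {c | Ch r K (j + 1) c ∧ Ch (flip r) K (N - j) c} X (Set.toFinite _) ⟨d, hd⟩
      exact ⟨c, fun _ => ⟨h1, h2⟩⟩
    · exact ⟨c₀, fun h => absurd h hj⟩
  choose x hx using H
  have hXm : ∀ j < N, ∀ c, Ch r K (j + 1) c → Ch (flip r) K (N - j) c → X (x j) ≤ X c :=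
    fun j hj c h1 h2 => (hx j hj).2 c ⟨h1, h2⟩
  have hYm : ∀ j < N, ∀ c, Ch r K (j + 1) c → Ch (flip r) K (N - j) c → Y (x j) ≤ Y c := by
    intro j hj c h1 h2
    rcases (hXm j hj c h1 h2).eq_or_lt with h | h
    · rw [hX h]
    · exact (rank_lt hr hY hN hj (hx j hj).1.1 h2 h).le
  refine ⟨x, fun j hj => (hx j hj).1.1, fun j hj => (hx j hj).1.2, hXm, hYm, fun j hj => ?_⟩
  rw [hr]
  constructor
  · obtain ⟨d, hd, hdr⟩ := (hx (j + 1) hj).1.1.inv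
    refine (hXm j (by omega) d hd ?_).trans_lt ((hr _ _).1 hdr).1
    have := Ch.succ (hx (j + 1) hj).1.2 (show flip r _ _ from hdr) hd.mem
    rwa [show N - (j + 1) + 1 = N - j by omega] at this
  · have h := (hx j (by omega)).1.2
    rw [show N - j = N - (j + 2) + 2 by omega] at h
    obtain ⟨d, hd, hdr⟩ := h.inv
    refine (hYm (j + 1) hj d ?_ ?_).trans_lt ((hr _ _).1 hdr).2
    · exact .succ (hx j (by omega)).1.1 hdr hd.mem
    · rwa [show N - (j + 1) = N - (j + 2) + 1 by omega]

/-- Transposing the plane reverses chains, and preserves least chains. -/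
lemma MinChain.reverse (M : MinChain X Y r K N x) :
    MinChain Y X (flip r) K N (fun j => x (N - 1 - j)) where
  g j hj := by
    have := M.e (N - 1 - j) (by omega)
    rwa [show N - (N - 1 - j) = j + 1 by omega] at this
  e j hj := by
    have := M.g (N - 1 - j) (by omega)
    rwa [show N - 1 - j + 1 = N - j by omega] at this
  minX j hj c h1 h2 := M.minY (N - 1 - j) (by omega) c
    (by rw [show N - 1 - j + 1 = N - j by omega]; exact h2)
    (by rwa [show N - (N - 1 - j) = j + 1 by omega])
  minY j hj c h1 h2 := M.minX (N - 1 - j) (by omega) c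
    (by rw [show N - 1 - j + 1 = N - j by omega]; exact h2)
    (by rwa [show N - (N - 1 - j) = j + 1 by omega])
  step j hj := by
    have := M.step (N - 1 - (j + 1)) (by omega)
    rwa [show N - 1 - (j + 1) + 1 = N - 1 - j by omega] at this

lemma MinChain.lt (M : MinChain X Y r K N x) (hr : ∀ c d, r c d ↔ X c < X d ∧ Y d < Y c)
    {i j : ℕ} (hij : i < j) (hj : j < N) : X (x i) < X (x j) ∧ Y (x j) < Y (x i) := by
  induction j, hij using Nat.le_induction with
  | base => exact (hr _ _).1 (M.step i hj)
  | succ j h ih =>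
    have h1 := ih (by omega)
    have h2 := (hr _ _).1 (M.step j hj)
    exact ⟨h1.1.trans h2.1, h2.2.trans h1.2⟩

/-- A point `c` to the lower left of `x j` from which a chain of length `N - j` starts ends
strictly shorter chains in the region `P` than `x j` does: climbing a chain that ends at `c`,
minimality keeps it to the left of the `x i`, so that one can switch to the `x i` with a gain
of one point, either where the chain first rises above them or at its top. -/
lemma MinChain.key (M : MinChain X Y r K N x) (hr : ∀ c d, r c d ↔ X c < X d ∧ Y d < Y c)
    (hX : Function.Injective X) (hY : Function.Injective Y)
    (hPK : ∀ j < N, ∀ c d, P c → K d → r c d → Y c < Y (x j) → K c)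
    (hPx : ∀ j, j + 1 < N → ∀ c, P c → X c < X (x j) → P (x (j + 1)) → P (x j))
    {k : ℕ} {c : α} (h : Ch r P k c) : ∀ j < N, P (x j) → X c < X (x j) → Y c < Y (x j) →
      Ch (flip r) K (N - j) c → Ch r P (k + 1) (x j) := by
  have left : ∀ c j, j < N → X c < X (x j) → Y c < Y (x j) → Ch (flip r) K (N - j) c →
      ∃ i, j = i + 1 ∧ X c < X (x i) := by
    intro c j hj h1 h2 h3
    rcases j with _ | i
    · exact absurd (M.minX 0 hj c (.one h3.mem) h3) (not_le.2 h1)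
    · refine ⟨i, rfl, ?_⟩
      have hs := (hr _ _).1 (M.step i hj)
      by_contra! h
      rcases h.eq_or_lt with h | h
      · rw [hX h] at hs; exact absurd (hs.2.trans h2) (lt_irrefl _)
      · exact absurd (M.minX (i + 1) hj c (.succ (M.g i (by omega))
          ((hr _ _).2 ⟨h, h2.trans hs.2⟩) h3.mem) h3) (not_le.2 h1)
  induction h with
  | @one c hc =>
    intro j hj hP h1 h2 h3
    obtain ⟨i, rfl, hi⟩ := left c j hj h1 h2 h3
    exact .succ (.one (hPx i hj c hc hi hP)) (M.step i hj) hP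
  | @succ k c₂ c h4 h5 hc ih =>
    intro j hj hP h1 h2 h3
    obtain ⟨i, rfl, hi⟩ := left c j hj h1 h2 h3
    have hPi := hPx i hj c hc hi hP
    refine .succ ?_ (M.step i hj) hP
    have h6 : X c₂ < X (x i) := ((hr _ _).1 h5).1.trans hi
    rcases lt_trichotomy (Y (x i)) (Y c₂) with h | h | h
    · exact .succ h4 ((hr _ _).2 ⟨h6, h⟩) hPi
    · rw [hY h] at h6; exact absurd h6 (lt_irrefl _)
    · refine ih i (by omega) hPi h6 h ?_
      have := Ch.succ h3 (show flip r c c₂ from h5)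
        (hPK i (by omega) c₂ c h4.mem h3.mem h5 h)
      rwa [show N - (i + 1) + 1 = N - i by omega] at this

/-- Lowering the points of a least chain does not lengthen chains in the region `P`, provided
the points that `x j` passes on its right are starting points of chains of length `N - j`. -/
lemma MinChain.transfer (M : MinChain X Y r K N x) (hr : ∀ c d, r c d ↔ X c < X d ∧ Y d < Y c)
    (hr' : ∀ c d, r' c d ↔ X c < X d ∧ Y' d < Y' c)
    (hX : Function.Injective X) (hY : Function.Injective Y)
    (hPK : ∀ j < N, ∀ c d, P c → K d → r c d → Y c < Y (x j) → K c)
    (hPx : ∀ j, j + 1 < N → ∀ c, P c → X c < X (x j) → P (x (j + 1)) → P (x j))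
    (hsame : ∀ c, P c → (∀ j < N, c ≠ x j) → Y' c = Y c)
    (hdown : ∀ j < N, P (x j) → Y' (x j) < Y (x j))
    (hE : ∀ j < N, P (x j) → ∀ c, P c → X c < X (x j) → Y' (x j) < Y c → Y c < Y (x j) →
      Ch (flip r) K (N - j) c)
    {k : ℕ} {c : α} (h : Ch r' P k c) : Ch r P k c := by
  induction h with
  | one h => exact .one h
  | @succ k c d h1 h2 hd ih =>
    have hc := h1.mem
    rw [hr'] at h2
    by_cases hdx : ∃ j < N, d = x j
    · obtain ⟨j, hj, rfl⟩ := hdx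
      by_cases hcx : ∃ i < N, c = x i
      · obtain ⟨i, hi, rfl⟩ := hcx
        rcases lt_trichotomy i j with h | h | h
        · exact .succ ih ((hr _ _).2 (M.lt hr h hj)) hd
        · subst h; exact absurd h2.1 (lt_irrefl _)
        · exact absurd (h2.1.trans (M.lt hr h hi).1) (lt_irrefl _)
      · push Not at hcx
        rw [hsame c hc hcx] at h2
        rcases lt_trichotomy (Y c) (Y (x j)) with h | h | h
        · exact M.key hr hX hY hPK hPx ih j hj hd h2.1 h (hE j hj hd c hc h2.1 h2.2 h)
        · exact absurd (hY h) (hcx j hj)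
        · exact .succ ih ((hr _ _).2 ⟨h2.1, h⟩) hd
    · push Not at hdx
      rw [hsame d hd hdx] at h2
      by_cases hcx : ∃ i < N, c = x i
      · obtain ⟨i, hi, rfl⟩ := hcx
        exact .succ ih ((hr _ _).2 ⟨h2.1, h2.2.trans (hdown i hi hc)⟩) hd
      · push Not at hcx
        rw [hsame c hc hcx] at h2
        exact .succ ih ((hr _ _).2 h2) hd

end

/-! ### Shifting a chain of a transversal -/

section
variable {n : ℕ}

/-- The point of column `d` is strictly to the right of and below the point of column `c`. -/
def PRel (π : Equiv.Perm (Fin n)) (c d : Fin n) : Prop := (c : ℕ) < d ∧ (π d : ℕ) < π c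

/-- Column coordinate. -/
def cX (c : Fin n) : ℤ := ((c : ℕ) : ℤ)

/-- Row coordinate of the point of `π` in a column. -/
def cY (π : Equiv.Perm (Fin n)) (c : Fin n) : ℤ := ((π c : ℕ) : ℤ)

/-- The columns of the points of `π` in the largest rectangle of the diagram whose top row
is `b`. -/
def JBox (lam : Fin n → ℕ) (π : Equiv.Perm (Fin n)) (b : Fin n) (c : Fin n) : Prop :=
  (π c : ℕ) ≤ b ∧ (c : ℕ) < lam b

/-- The columns of the points strictly to the lower left of the point of `π` in row `b`. -/
def FBox (π : Equiv.Perm (Fin n)) (b : Fin n) (c : Fin n) : Prop :=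
  (π c : ℕ) < b ∧ (c : ℕ) < π.symm b

/-- An occurrence of the decreasing pattern of length `s + 1` with all rows at most `b` and
all columns in row `b` of the diagram. -/
def JIn (lam : Fin n → ℕ) (s : ℕ) (π : Equiv.Perm (Fin n)) (b : Fin n) : Prop :=
  ∃ c, Ch (PRel π) (JBox lam π b) (s + 1) c

/-- An occurrence of `s ⋯ 2 1 (s + 1)` whose last point is in row `b`. -/
def FIn (s : ℕ) (π : Equiv.Perm (Fin n)) (b : Fin n) : Prop :=
  ∃ c, Ch (PRel π) (FBox π b) s c

lemma cX_inj : Function.Injective (cX (n := n)) := fun c d h => by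
  unfold cX at h; exact Fin.ext (by exact_mod_cast h)

lemma cY_inj (π : Equiv.Perm (Fin n)) : Function.Injective (cY π) := fun c d h => by
  unfold cY at h; exact π.injective (Fin.ext (by exact_mod_cast h))

lemma PRel_iff (π : Equiv.Perm (Fin n)) (c d : Fin n) :
    PRel π c d ↔ cX c < cX d ∧ cY π d < cY π c := by
  unfold PRel cX cY; omega

lemma flip_PRel_iff (π : Equiv.Perm (Fin n)) (c d : Fin n) :
    flip (PRel π) c d ↔ cY π c < cY π d ∧ cX d < cX c := by
  unfold flip PRel cX cY; omega

/-- Rotating the plane by 180 degrees reverses chains. -/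
lemma PRel_iff_neg (π : Equiv.Perm (Fin n)) (c d : Fin n) :
    PRel π c d ↔ -cY π c < -cY π d ∧ -cX d < -cX c := by
  unfold PRel cX cY; omega

lemma flip_PRel_iff_neg (π : Equiv.Perm (Fin n)) (c d : Fin n) :
    flip (PRel π) c d ↔ -cX c < -cX d ∧ -cY π d < -cY π c := by
  unfold flip PRel cX cY; omega

lemma eq_of_val {x y : Fin n} (h : (x : ℕ) = y) : x = y := Fin.ext h

/-- `π'` arises from `π` by replacing the decreasing sequence of points in the columns
`x 0 < ⋯ < x s`, whose first point is in row `a`, by a copy of `s ⋯ 2 1 (s + 1)` in the same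
rows and columns. -/
structure Link (π π' : Equiv.Perm (Fin n)) (s : ℕ) (a : Fin n) (x : ℕ → Fin n) : Prop where
  mono : ∀ j < s, (x j : ℕ) < x (j + 1)
  anti : ∀ j < s, (π (x (j + 1)) : ℕ) < π (x j)
  top : π (x 0) = a
  shift : ∀ j < s, π' (x j) = π (x (j + 1))
  last : π' (x s) = a
  off : ∀ c, (∀ j < s + 1, c ≠ x j) → π' c = π c

namespace Link

variable {π π' : Equiv.Perm (Fin n)} {s : ℕ} {a : Fin n} {x : ℕ → Fin n}

lemma lt (L : Link π π' s a x) {i j : ℕ} (h : i < j) (hj : j ≤ s) :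
    (x i : ℕ) < x j ∧ (π (x j) : ℕ) < π (x i) := by
  induction j, h using Nat.le_induction with
  | base => exact ⟨L.mono i hj, L.anti i hj⟩
  | succ j h ih =>
    have h1 := ih (by omega)
    have h2 := L.mono j hj
    have h3 := L.anti j hj
    omega

lemma le_top (L : Link π π' s a x) {j : ℕ} (hj : j ≤ s) : (π (x j) : ℕ) ≤ a := by
  rcases Nat.eq_zero_or_pos j with rfl | h
  · rw [L.top]
  · have := (L.lt h hj).2; rw [L.top] at this; omega

lemma lt_top (L : Link π π' s a x) {j : ℕ} (h : 0 < j) (hj : j ≤ s) : (π (x j) : ℕ) < a := by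
  have := (L.lt h hj).2; rwa [L.top] at this

lemma le_last (L : Link π π' s a x) {j : ℕ} (hj : j ≤ s) : (x j : ℕ) ≤ x s := by
  rcases hj.eq_or_lt with rfl | h
  · exact le_rfl
  · exact (L.lt h le_rfl).1.le

lemma symm_last (L : Link π π' s a x) : π'.symm a = x s := by
  rw [Equiv.symm_apply_eq, L.last]

lemma shift_lt (L : Link π π' s a x) {j : ℕ} (hj : j < s) : (π' (x j) : ℕ) < a := by
  rw [L.shift j hj]; exact L.lt_top (by omega) hj

lemma le_top' (L : Link π π' s a x) {j : ℕ} (hj : j ≤ s) : (π' (x j) : ℕ) ≤ a := by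
  rcases hj.eq_or_lt with rfl | h
  · rw [L.last]
  · exact (L.shift_lt h).le

lemma off_of_row (L : Link π π' s a x) {c : Fin n} (h : (a : ℕ) < π c) : π' c = π c :=
  L.off c fun j hj hc => by
    have := L.le_top (j := j) (by omega); rw [← hc] at this; omega

lemma symm_eq (L : Link π π' s a x) {b : Fin n} (h : a < b) : π'.symm b = π.symm b := by
  rw [Equiv.symm_apply_eq, L.off_of_row]
  · simp
  · simpa using h

variable {lam : Fin n → ℕ}

/-- The chain of the new configuration, in its own box. -/
lemma chain' (L : Link π π' s a x) {j : ℕ} (hj : j < s) :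
    Ch (PRel π') (FBox π' a) (j + 1) (x j) := by
  refine Ch.of_seq (N := s) (fun i hi => ⟨L.shift_lt hi, ?_⟩)
    (fun i hi => ⟨L.mono i (by omega), ?_⟩) j hj
  · rw [L.symm_last]; exact (L.lt hi le_rfl).1
  · rw [L.shift i (by omega), L.shift (i + 1) hi]; exact L.anti (i + 1) hi

lemma chain'_flip (L : Link π π' s a x) {j : ℕ} (hj : j < s) :
    Ch (flip (PRel π')) (FBox π' a) (s - j) (x j) := by
  refine Ch.of_seq_flip (N := s) (fun i hi => ⟨L.shift_lt hi, ?_⟩)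
    (fun i hi => ⟨L.mono i (by omega), ?_⟩) j hj
  · rw [L.symm_last]; exact (L.lt hi le_rfl).1
  · rw [L.shift i (by omega), L.shift (i + 1) hi]; exact L.anti (i + 1) hi

lemma chain (L : Link π π' s a x) (ha : (x s : ℕ) < lam a) {j : ℕ} (hj : j < s + 1) :
    Ch (PRel π) (JBox lam π a) (j + 1) (x j) :=
  Ch.of_seq (N := s + 1) (fun _ hi => ⟨L.le_top (by omega), (L.le_last (by omega)).trans_lt ha⟩)
    (fun i hi => ⟨L.mono i (by omega), L.anti i (by omega)⟩) j hj

lemma chain_flip (L : Link π π' s a x) (ha : (x s : ℕ) < lam a) {j : ℕ} (hj : j < s + 1) :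
    Ch (flip (PRel π)) (JBox lam π a) (s + 1 - j) (x j) :=
  Ch.of_seq_flip (N := s + 1)
    (fun _ hi => ⟨L.le_top (by omega), (L.le_last (by omega)).trans_lt ha⟩)
    (fun i hi => ⟨L.mono i (by omega), L.anti i (by omega)⟩) j hj

/-- Replacing the least chain creates no pattern ending in a row above `a`. -/
lemma forward_F (L : Link π π' s a x) (hs : 0 < s)
    (M : MinChain cX (cY π) (PRel π) (JBox lam π a) (s + 1) x) {b : Fin n} (hab : a < b)
    (h : ¬ FIn s π b) : ¬ FIn s π' b := by
  rintro ⟨c, hc⟩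
  apply h
  have hab' : (a : ℕ) < b := hab
  set d₀ := π.symm b with hd₀
  have hsymm : π'.symm b = d₀ := L.symm_eq hab
  have hπd : π d₀ = b := by simp [hd₀]
  have hne : ∀ j ≤ s, (x j : ℕ) ≠ d₀ := fun j hj hh => by
    have := L.le_top hj; rw [eq_of_val hh, hπd] at this; omega
  -- a point beyond the whole chain already ends a pattern in `π`
  by_cases hd : (d₀ : ℕ) ≤ x s
  swap
  · obtain ⟨m, rfl⟩ : ∃ m, s = m + 1 := ⟨s - 1, by omega⟩
    refine ⟨x m, Ch.of_seq (N := m + 1) (fun i hi => ⟨?_, ?_⟩)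
      (fun i hi => ⟨L.mono i (by omega), L.anti i (by omega)⟩) m (by omega)⟩
    · have := L.le_top (j := i) (by omega); omega
    · have := L.le_last (j := i) (by omega); omega
  refine ⟨c, M.transfer (Y' := cY π') (r' := PRel π') (PRel_iff π) (PRel_iff π') cX_inj (cY_inj π)
    ?_ ?_ ?_ ?_ ?_ (hc.mono ?_)⟩
  · rintro j hj c d - ⟨-, hd2⟩ hcd hY
    have := L.le_top (j := j) (by omega)
    simp only [PRel, cY, JBox] at *
    omega
  · rintro j hj c - - ⟨h1, h2⟩
    have := L.le_top (j := j) (by omega)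
    have := L.mono j (by omega)
    exact ⟨by omega, by omega⟩
  · intro c _ hc
    simp only [cY, L.off c hc]
  · rintro j hj ⟨-, h2⟩
    have : j < s := by
      by_contra hh; obtain rfl : j = s := by omega
      omega
    simp only [cY, L.shift j this]
    exact_mod_cast L.anti j this
  · rintro j hj ⟨-, h2⟩ c - hX hY1 hY2
    have hjs : j < s := by
      by_contra hh; obtain rfl : j = s := by omega
      omega
    have hx := L.mono j hjs
    have hx' := L.le_top (j := j) (by omega)
    have he := M.e (j + 1) (by omega)
    have hK := he.mem
    simp only [cX, cY, L.shift j hjs] at hX hY1 hY2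
    have := he.succ (d := c) (show flip (PRel π) _ _ from ⟨by omega, by omega⟩)
      ⟨by omega, by have := hK.2; omega⟩
    rwa [show s + 1 - (j + 1) + 1 = s + 1 - j by omega] at this
  · rintro c ⟨h1, h2⟩
    rw [hsymm] at h2
    refine ⟨?_, h2⟩
    by_cases hcx : ∃ j < s + 1, c = x j
    · obtain ⟨j, hj, rfl⟩ := hcx
      have := L.le_top (j := j) (by omega); omega
    · push Not at hcx
      rwa [← L.off c hcx]

/-- Replacing the least chain creates no decreasing pattern below row `a`. -/
lemma forward_J (L : Link π π' s a x) (hlam : Antitone lam)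
    (M : MinChain cX (cY π) (PRel π) (JBox lam π a) (s + 1) x) {b : Fin n} (hba : b < a)
    (h : ¬ JIn lam s π b) : ¬ JIn lam s π' b := by
  rintro ⟨c, hc⟩
  apply h
  have hba' : (b : ℕ) < a := hba
  have hl : lam a ≤ lam b := hlam hba.le
  -- points are labelled by the columns they have in `π`, and compared by rows
  obtain ⟨c, hc⟩ := Ch.rev (r := flip (PRel π')) hc
  suffices H : Ch (flip (PRel π)) (JBox lam π b) (s + 1) (π.symm (π' c)) from H.rev
  have hlast : ∀ j ≤ s, (x j : ℕ) < lam a := fun j hj => (M.g j (by omega)).mem.2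
  have hinv : ∀ j < s, π'.symm (π (x (j + 1))) = x j := fun j hj => by
    rw [Equiv.symm_apply_eq, L.shift j hj]
  refine M.reverse.transfer (Y' := fun c => ((π'.symm (π c) : ℕ) : ℤ))
    (r' := fun c d => cY π c < cY π d ∧ ((π'.symm (π d) : ℕ) : ℤ) < ((π'.symm (π c) : ℕ) : ℤ))
    (flip_PRel_iff π) (fun _ _ => Iff.rfl) (cY_inj π) cX_inj ?_ ?_ ?_ ?_ ?_
    (hc.map (fun c => π.symm (π' c)) ?_ ?_)
  · rintro j hj c d - ⟨hd1, hd2⟩ hcd hY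
    have := hlast (s - j) (by omega)
    simp only [flip, PRel, cX, JBox, Nat.add_sub_cancel] at *
    omega
  · rintro j hj c - - ⟨h1, h2⟩
    have h3 := hlast (s - j) (by omega)
    have h4 := (L.lt (i := s - (j + 1)) (j := s - j) (by omega) (by omega)).2
    simp only [JBox, Nat.add_sub_cancel] at *
    omega
  · intro c _ hc
    have hoff : π' c = π c := L.off c fun j hj hh => hc (s - j) (by omega) (by
      rw [hh]; congr 1; omega)
    simp only [cX, ← hoff, Equiv.symm_apply_apply]
  · rintro j hj ⟨h1, h2⟩
    simp only [cX, Nat.add_sub_cancel] at *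
    have : s - j ≠ 0 := fun h0 => by rw [h0, L.top] at h1; omega
    obtain ⟨i, hi⟩ := Nat.exists_eq_succ_of_ne_zero this
    have := L.mono i (by omega)
    rw [hi, Nat.succ_eq_add_one, hinv i (by omega)]
    omega
  · rintro j hj ⟨h1, h2⟩ c ⟨hc1, hc2⟩ hX hY1 hY2
    simp only [cX, cY, Nat.add_sub_cancel] at *
    have : s - j ≠ 0 := fun h0 => by rw [h0, L.top] at h1; omega
    obtain ⟨i, hi⟩ := Nat.exists_eq_succ_of_ne_zero this
    rw [Nat.succ_eq_add_one] at hi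
    rw [hi] at h1 h2 hX hY1 hY2
    rw [hinv i (by omega)] at hY1
    have h3 := hlast (i + 1) (by omega)
    have h4 := L.anti i (by omega)
    have := (M.g i (by omega)).succ (d := c) (show PRel π _ _ from ⟨by omega, by omega⟩)
      ⟨by omega, by omega⟩
    rwa [show s + 1 - j = i + 1 + 1 by omega]
  · rintro c d - - h
    simp only [flip, PRel, cY, Equiv.apply_symm_apply, Equiv.symm_apply_apply] at *
    omega
  · rintro c ⟨h1, h2⟩
    refine ⟨by simpa using h1, ?_⟩
    by_cases hcx : ∃ j < s + 1, c = x j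
    · obtain ⟨j, hj, rfl⟩ := hcx
      rcases Nat.lt_or_ge j s with hjs | hjs
      · rw [L.shift j hjs, Equiv.symm_apply_apply]
        exact (hlast (j + 1) (by omega)).trans_le hl
      · obtain rfl : j = s := by omega
        rw [L.last] at h1; omega
    · push Not at hcx
      rwa [L.off c hcx, Equiv.symm_apply_apply]

/-- Replacing the greatest chain back creates no pattern ending in a row above `a`. -/
lemma backward_F (L : Link π π' s a x) (hs : 0 < s)
    (M : MinChain (fun c => -cY π' c) (fun c => -cX c) (PRel π') (FBox π' a) s x)
    {b : Fin n} (hab : a < b) (h : ¬ FIn s π' b) : ¬ FIn s π b := by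
  rintro ⟨c, hc⟩
  apply h
  have hab' : (a : ℕ) < b := hab
  set d₀ := π.symm b with hd₀
  have hsymm : π'.symm b = d₀ := L.symm_eq hab
  by_cases hd : (d₀ : ℕ) ≤ x s
  swap
  · obtain ⟨m, rfl⟩ : ∃ m, s = m + 1 := ⟨s - 1, by omega⟩
    refine ⟨x m, (L.chain' (j := m) (by omega)).mono fun c hc => ⟨by have := hc.1; omega, ?_⟩⟩
    have := hc.2
    rw [L.symm_last] at this
    rw [hsymm]; omega
  obtain ⟨c, hc⟩ := Ch.rev (r := flip (PRel π)) hc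
  suffices H : Ch (flip (PRel π')) (FBox π' b) s c from H.rev
  refine M.reverse.transfer (Y' := fun c => -cY π c) (r' := flip (PRel π))
    (flip_PRel_iff_neg π') (flip_PRel_iff_neg π) (fun c d h => cX_inj (neg_injective h))
    (fun c d h => cY_inj π' (neg_injective h)) ?_ ?_ ?_ ?_ ?_ (hc.mono ?_)
  · rintro j hj c d ⟨-, hc2⟩ ⟨hd1, hd2⟩ hcd -
    rw [hsymm] at hc2
    simp only [flip, PRel, FBox, L.symm_last] at *
    omega
  · rintro j hj c ⟨-, h1⟩ h2 -
    have := L.le_top' (j := s - 1 - j) (by omega)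
    simp only [FBox, cX] at *
    omega
  · intro c ⟨_, hc2⟩ hc
    rw [hsymm] at hc2
    simp only [cY]
    rw [L.off c fun j hj hh => ?_]
    rcases Nat.lt_or_ge j s with hjs | hjs
    · exact hc (s - 1 - j) (by omega) (by rw [hh]; congr 1; omega)
    · obtain rfl : j = s := by omega
      rw [hh] at hc2; omega
  · rintro j hj -
    have h1 := L.shift (s - 1 - j) (by omega)
    have h2 := L.anti (s - 1 - j) (by omega)
    simp only [cY, h1]
    omega
  · rintro j hj - c ⟨hc1, hc2⟩ hX hY1 hY2
    rw [hsymm] at hc2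
    have h1 := L.shift (s - 1 - j) (by omega)
    rw [show s - j = (s - 1 - j) + 1 by omega]
    generalize hi : s - 1 - j = i at *
    have hle := L.le_top (j := i) (by omega)
    simp only [cX, cY] at hX hY1 hY2
    have hK : FBox π' a c := ⟨by omega, by rw [L.symm_last]; omega⟩
    rcases i with _ | i
    · exact Ch.one hK
    · refine Ch.succ (M.g i (by omega)) ?_ hK
      have := L.mono i (by omega)
      refine ⟨by omega, ?_⟩
      rw [L.shift i (by omega)]
      omega
  · rintro c ⟨h1, h2⟩
    refine ⟨?_, by rw [hsymm]; exact h2⟩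
    by_cases hcx : ∃ j < s + 1, c = x j
    · obtain ⟨j, hj, rfl⟩ := hcx
      have := L.le_top' (j := j) (by omega); omega
    · push Not at hcx
      rwa [L.off c hcx]

/-- Replacing the greatest chain back creates no decreasing pattern below row `a`. -/
lemma backward_J (L : Link π π' s a x) (hlam : Antitone lam) (ha : (x s : ℕ) < lam a)
    (M : MinChain (fun c => -cY π' c) (fun c => -cX c) (PRel π') (FBox π' a) s x)
    {b : Fin n} (hba : b < a) (h : ¬ JIn lam s π' b) : ¬ JIn lam s π b := by
  rintro ⟨c, hc⟩
  apply h
  have hba' : (b : ℕ) < a := hba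
  have hl : lam a ≤ lam b := hlam hba.le
  -- points are labelled by the columns they have in `π'`, and compared by rows
  refine ⟨π'.symm (π c), ?_⟩
  have hinv : ∀ j < s, π.symm (π' (x j)) = x (j + 1) := fun j hj => by
    rw [Equiv.symm_apply_eq, L.shift j hj]
  refine M.transfer (Y' := fun c => -((π.symm (π' c) : ℕ) : ℤ))
    (r' := fun c d => -cY π' c < -cY π' d ∧
      -((π.symm (π' d) : ℕ) : ℤ) < -((π.symm (π' c) : ℕ) : ℤ))
    (PRel_iff_neg π') (fun _ _ => Iff.rfl) (fun c d h => cY_inj π' (neg_injective h))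
    (fun c d h => cX_inj (neg_injective h)) ?_ ?_ ?_ ?_ ?_
    (hc.map (fun c => π'.symm (π c)) ?_ ?_)
  · rintro j hj c d ⟨hc1, -⟩ ⟨hd1, hd2⟩ hcd -
    have := hcd.1
    exact ⟨by omega, by omega⟩
  · rintro j hj c ⟨h1, -⟩ h2 -
    have := L.le_last (j := j) (by omega)
    simp only [JBox, cY] at *
    omega
  · intro c ⟨hc1, _⟩ hc
    have hoff : π' c = π c := L.off c fun j hj hh => by
      rcases Nat.lt_or_ge j s with hjs | hjs
      · exact hc j hjs hh
      · obtain rfl : j = s := by omega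
        rw [hh, L.last] at hc1; omega
    simp only [cX, hoff, Equiv.symm_apply_apply]
  · rintro j hj -
    have := L.mono j hj
    simp only [cX, hinv j hj]
    omega
  · rintro j hj - c ⟨hc1, hc2⟩ hX hY1 hY2
    simp only [cX, cY, hinv j hj] at hX hY1 hY2
    have hle := L.le_last (j := j + 1) (by omega)
    have hK : FBox π' a c := ⟨by omega, by rw [L.symm_last]; omega⟩
    rcases Nat.lt_or_ge (j + 1) s with hjs | hjs
    · have h3 := L.shift j hj
      have h4 := L.shift (j + 1) hjs
      have h5 := L.anti (j + 1) hjs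
      have := (M.e (j + 1) hjs).succ (d := c)
        (show flip (PRel π') _ _ from ⟨by omega, by rw [h4]; rw [h3] at hX; omega⟩) hK
      rwa [show s - (j + 1) + 1 = s - j by omega] at this
    · rw [show s - j = 1 by omega]; exact .one hK
  · rintro c d - - h
    simp only [PRel, cY, Equiv.apply_symm_apply, Equiv.symm_apply_apply] at *
    omega
  · rintro c ⟨h1, h2⟩
    refine ⟨by simpa using h1, ?_⟩
    by_cases hcx : ∃ j < s + 1, c = x j
    · obtain ⟨j, hj, rfl⟩ := hcx
      rcases j with _ | j
      · rw [L.top] at h1; omega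
      · rw [← L.shift j (by omega), Equiv.symm_apply_apply]
        have := L.le_last (j := j) (by omega)
        omega
    · push Not at hcx
      rwa [← L.off c hcx, Equiv.symm_apply_apply]

end Link

end

/-! ### The shifted chain determines the original one -/

namespace Link

variable {n : ℕ} {π π' : Equiv.Perm (Fin n)} {s : ℕ} {a : Fin n} {x : ℕ → Fin n}
  {lam : Fin n → ℕ}

/-- A point strictly between two consecutive columns of the chain is not on the chain. -/
lemma ne_of_between (L : Link π π' s a x) {k : ℕ} (hk : k < s) {c : Fin n} (h1 : (x k : ℕ) < c)
    (h2 : (c : ℕ) < x (k + 1)) : ∀ i < s + 1, c ≠ x i := by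
  rintro i hi rfl
  rcases Nat.lt_or_ge k i with h | h
  · rcases Nat.eq_or_lt_of_le (Nat.succ_le_of_lt h) with h' | h'
    · rw [← h'] at h2; exact lt_irrefl _ h2
    · have := (L.lt h' (by omega)).1; simp only [Nat.succ_eq_add_one] at this; omega
  · rcases h.eq_or_lt with h' | h'
    · rw [h'] at h1; exact lt_irrefl _ h1
    · have := (L.lt h' hk.le).1; omega

/-- A point of `π` off the chain, above the row of `x j` and starting a chain of length `s + 1 - j`,
cannot have the rank of `x j` in an `s`-chain of `π'`: climbing that chain, one stays above the
rows of the points `x i` of `π`, and finally leaves the rectangle through its top. -/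
lemma forward_climb (L : Link π π' s a x)
    (hl : (x s : ℕ) < lam a)
    (hN : ∀ c, ¬ Ch (PRel π) (JBox lam π a) (s + 1 + 1) c)
    (hN' : ∀ c, ¬ Ch (PRel π') (FBox π' a) (s + 1) c) :
    ∀ j < s, ∀ c, (∀ i < s + 1, c ≠ x i) → (π (x j) : ℕ) < π c →
      Ch (flip (PRel π)) (JBox lam π a) (s + 1 - j) c →
      Ch (flip (PRel π')) (FBox π' a) (s - j) c → Ch (PRel π') (FBox π' a) (j + 1) c → False := by
  intro j
  induction j with
  | zero =>
    intro hj c _ h1 h2 _ _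
    have := h2.mem.1
    rw [L.top] at h1; omega
  | succ j ih =>
    intro hj c hc h1 h2 h3 h4
    obtain ⟨d, hd, hdc⟩ := h4.inv
    have hE' := h3.succ (show flip (PRel π') c d from hdc) hd.mem
    rw [show s - (j + 1) + 1 = s - j by omega] at hE'
    have hoff := L.off c hc
    have hsh := L.shift j (by omega)
    obtain ⟨hdc1, hdc2⟩ := hdc
    obtain ⟨hd1, hd2⟩ := hd.mem
    have hright : ¬ (d : ℕ) < x j := by
      intro h
      have := rank_lt (X := cX) (Y := cY π') (PRel_iff π') (cY_inj π') hN' (j := j) (by omega)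
        hd (L.chain'_flip (j := j) (by omega)) (by unfold cX; omega)
      simp only [cY, hsh] at this
      omega
    have hdx : ∀ i < s + 1, d ≠ x i := by
      rintro i hi rfl
      rcases Nat.lt_or_ge i s with his | his
      · rw [L.shift i his] at hdc2
        rcases Nat.lt_or_ge i j with hij | hij
        · exact hright (L.lt hij (by omega)).1
        · rcases hij.eq_or_lt with rfl | hij
          · omega
          · have := (L.lt (i := j + 1) (j := i + 1) (by omega) (by omega)).2
            omega
      · obtain rfl : i = s := by omega
        rw [L.last] at hd1; omega
    have hoff2 := L.off d hdx
    rw [hoff, hoff2] at hdc2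
    rw [hoff2] at hd1
    have hE := h2.succ (d := d) (show flip (PRel π) c d from ⟨hdc1, hdc2⟩)
      ⟨by omega, by have := h2.mem.2; omega⟩
    rw [show s + 1 - (j + 1) + 1 = s + 1 - j by omega] at hE
    refine ih (by omega) d hdx ?_ hE hE' hd
    rcases lt_trichotomy (π (x j) : ℕ) (π d) with h | h | h
    · exact h
    · exact absurd (π.injective (eq_of_val h)).symm (hdx j (by omega))
    · have hne : (d : ℕ) ≠ x j := fun h => hdx j (by omega) (eq_of_val h)
      obtain ⟨e, he⟩ := hE.join (L.chain hl (j := j) (by omega))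
        (show PRel π (x j) d from ⟨by omega, h⟩)
      rw [show j + 1 + (s + 1 - j) = s + 1 + 1 by omega] at he
      exact absurd he (hN e)

/-- A point with the rank of `x k` in an `s`-chain of `π'` does not lie between the columns of
`x k` and `x (k + 1)`: either it lengthens the least chain of `π`, or it is to the upper right
of `x k`. -/
lemma forward_between (L : Link π π' s a x) (hl : (x s : ℕ) < lam a)
    (hN : ∀ c, ¬ Ch (PRel π) (JBox lam π a) (s + 1 + 1) c)
    (hN' : ∀ c, ¬ Ch (PRel π') (FBox π' a) (s + 1) c) {k : ℕ} (hk : k < s) {c : Fin n}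
    (h1 : Ch (PRel π') (FBox π' a) (k + 1) c) (h2 : Ch (flip (PRel π')) (FBox π' a) (s - k) c)
    (h3 : (x k : ℕ) < c) (h4 : (c : ℕ) < x (k + 1)) : False := by
  have hcx := L.ne_of_between hk h3 h4
  have hoff := L.off c hcx
  have hrow := rank_lt (X := cX) (Y := cY π') (PRel_iff π') (cY_inj π') hN' hk
    (L.chain' hk) h2 (by unfold cX; omega)
  simp only [cY, hoff, L.shift k hk] at hrow
  have hm := h1.mem
  have hK : JBox lam π a c := ⟨by have := hm.1; omega, by
    have := hm.2; rw [L.symm_last] at this; omega⟩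
  have hE := L.chain_flip hl (j := k + 1) (by omega)
  have hrel : PRel π c (x (k + 1)) := ⟨h4, by omega⟩
  rcases lt_trichotomy (π (x k) : ℕ) (π c) with h | h | h
  · have := hE.succ (show flip (PRel π) _ _ from hrel) hK
    rw [show s + 1 - (k + 1) + 1 = s + 1 - k by omega] at this
    exact L.forward_climb hl hN hN' k hk c hcx h this h2 h1
  · exact absurd (π.injective (eq_of_val h)).symm (hcx k (by omega))
  · obtain ⟨e, he⟩ := hE.join
      ((L.chain hl (j := k) (by omega)).succ (show PRel π (x k) c from ⟨h3, h⟩) hK) hrel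
    rw [show k + 1 + 1 + (s + 1 - (k + 1)) = s + 1 + 1 by omega] at he
    exact hN e he

lemma forward_col (L : Link π π' s a x) (hl : (x s : ℕ) < lam a)
    (hN : ∀ c, ¬ Ch (PRel π) (JBox lam π a) (s + 1 + 1) c)
    (hN' : ∀ c, ¬ Ch (PRel π') (FBox π' a) (s + 1) c) :
    ∀ m k, k + m + 1 = s → ∀ c, Ch (PRel π') (FBox π' a) (k + 1) c →
      Ch (flip (PRel π')) (FBox π' a) (s - k) c → (c : ℕ) ≤ x k := by
  intro m
  induction m with
  | zero =>
    intro k hk c h1 h2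
    by_contra! h
    have hlt : (c : ℕ) < x (k + 1) := by
      have := h1.mem.2; rwa [L.symm_last, ← hk] at this
    exact L.forward_between hl hN hN' (by omega) h1 h2 h hlt
  | succ m ih =>
    intro k hk c h1 h2
    by_contra! h
    rcases Nat.lt_or_ge (c : ℕ) (x (k + 1)) with hlt | hge
    · exact L.forward_between hl hN hN' (by omega) h1 h2 h hlt
    · rw [show s - k = s - (k + 2) + 2 by omega] at h2
      obtain ⟨d, hd, hdr⟩ := h2.inv
      have := ih (k + 1) (by omega) d (h1.succ hdr hd.mem)
        (by rwa [show s - (k + 1) = s - (k + 2) + 1 by omega])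
      have := hdr.1
      omega

/-- The shifted least chain of `π` is the greatest `s`-chain of `π'` below and to the left of
the point of `π'` in row `a`. -/
lemma forward_min (L : Link π π' s a x) (hl : (x s : ℕ) < lam a)
    (hN : ∀ c, ¬ Ch (PRel π) (JBox lam π a) (s + 1 + 1) c)
    (hN' : ∀ c, ¬ Ch (PRel π') (FBox π' a) (s + 1) c) :
    MinChain (fun c => -cY π' c) (fun c => -cX c) (PRel π') (FBox π' a) s x where
  g j hj := L.chain' hj
  e j hj := L.chain'_flip hj
  minX j hj c h1 h2 := by
    have := L.forward_col hl hN hN' (s - 1 - j) j (by omega) c h1 h2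
    rcases this.eq_or_lt with h | h
    · rw [eq_of_val h]
    · have := rank_lt (X := cX) (Y := cY π') (PRel_iff π') (cY_inj π') hN' hj h1
        (L.chain'_flip hj) (by unfold cX; omega)
      omega
  minY j hj c h1 h2 := by
    have := L.forward_col hl hN hN' (s - 1 - j) j (by omega) c h1 h2
    simp only [cX]; omega
  step j hj := ⟨L.mono j (by omega), by
    rw [L.shift j (by omega), L.shift (j + 1) hj]; exact L.anti (j + 1) hj⟩

/-- A point of `π'` to the left of `x j` that ends a chain of length `j + 1` lies below the
row of `x j`, as it could be continued to an `(s + 1)`-chain otherwise. -/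
lemma backward_row (L : Link π π' s a x) (hN' : ∀ c, ¬ Ch (PRel π') (FBox π' a) (s + 1) c)
    {j : ℕ} (hj : j < s) {c : Fin n} (hc : ∀ i < s + 1, c ≠ x i) (h : (c : ℕ) < x j)
    (hG : Ch (PRel π') (FBox π' a) (j + 1) c) : (π c : ℕ) < π (x (j + 1)) := by
  rcases lt_trichotomy (π c : ℕ) (π (x (j + 1))) with h1 | h1 | h1
  · exact h1
  · exact absurd (π.injective (eq_of_val h1)) (hc _ (by omega))
  · obtain ⟨e, he⟩ := (L.chain'_flip hj).join hG
      (show PRel π' c (x j) from ⟨h, by rw [L.off c hc, L.shift j hj]; exact h1⟩)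
    rw [show j + 1 + (s - j) = s + 1 by omega] at he
    exact (hN' e he).elim

/-- A point to the lower left of `x j`, of the same rank in an `(s + 1)`-chain of `π`, cannot end
a chain of length `j + 1` in `π'`: descending its chain, one stays to the lower left of the
`x i`, and finally gets an `(s + 1)`-chain of `π'`. -/
lemma backward_descend (L : Link π π' s a x) (hl : (x s : ℕ) < lam a)
    (hN : ∀ c, ¬ Ch (PRel π) (JBox lam π a) (s + 1 + 1) c)
    (hN' : ∀ c, ¬ Ch (PRel π') (FBox π' a) (s + 1) c) :
    ∀ m j, j + m = s → ∀ c, (∀ i < s + 1, c ≠ x i) → (c : ℕ) < x j →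
      (j < s → (π c : ℕ) < π (x (j + 1))) → Ch (PRel π') (FBox π' a) (j + 1) c →
      Ch (flip (PRel π)) (JBox lam π a) (s + 1 - j) c → False := by
  intro m
  induction m with
  | zero => rintro j rfl c - - - h -; exact hN' c h
  | succ m ih =>
    intro j hj c hc h1 h2 h3 h4
    have h2 := h2 (by omega)
    rw [show s + 1 - j = m + 2 by omega] at h4
    obtain ⟨d, hd, hdr⟩ := h4.inv
    rw [show m + 1 = s + 1 - (j + 1) by omega] at hd
    obtain ⟨hr1, hr2⟩ : PRel π c d := hdr
    have hle : (d : ℕ) ≤ x (j + 1) := by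
      by_contra! h
      have := rank_lt (X := cX) (Y := cY π) (PRel_iff π) (cY_inj π) hN (j := j + 1) (by omega)
        (L.chain hl (by omega)) hd (by unfold cX; omega)
      simp only [cY] at this
      omega
    have hdx : ∀ i < s + 1, d ≠ x i := by
      rintro i hi rfl
      rcases lt_trichotomy i (j + 1) with h | rfl | h
      · have := (L.lt h (by omega)).2; omega
      · omega
      · have := (L.lt h (by omega)).1; omega
    have hlt : (d : ℕ) < x (j + 1) :=
      lt_of_le_of_ne hle fun h => hdx (j + 1) (by omega) (eq_of_val h)
    have hoff := L.off c hc
    have hoff2 := L.off d hdx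
    have hcm := h4.mem.1
    have hG : Ch (PRel π') (FBox π' a) (j + 1 + 1) d :=
      h3.succ ⟨hr1, by rw [hoff, hoff2]; exact hr2⟩ ⟨by rw [hoff2]; omega, by
        rw [L.symm_last]; exact hlt.trans_le (L.le_last (by omega))⟩
    exact ih (j + 1) (by omega) d hdx hlt (fun hjs => L.backward_row hN' hjs hdx hlt hG) hG hd

lemma backward_col (L : Link π π' s a x) (hl : (x s : ℕ) < lam a)
    (hN : ∀ c, ¬ Ch (PRel π) (JBox lam π a) (s + 1 + 1) c)
    (hN' : ∀ c, ¬ Ch (PRel π') (FBox π' a) (s + 1) c)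
    (hT : ∀ c, Ch (flip (PRel π)) (JBox lam π a) (s + 1) c → π c = a) :
    ∀ j < s + 1, ∀ c, Ch (PRel π) (JBox lam π a) (j + 1) c →
      Ch (flip (PRel π)) (JBox lam π a) (s + 1 - j) c → (x j : ℕ) ≤ c := by
  intro j
  induction j with
  | zero =>
    intro _ c _ h
    rw [π.injective ((hT c h).trans L.top.symm)]
  | succ j ih =>
    intro hj c h1 h2
    by_contra! h
    rcases Nat.lt_or_ge (x j : ℕ) c with hlt | hge
    · have hcx := L.ne_of_between (by omega) hlt h
      have hoff := L.off c hcx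
      have hsh := L.shift j (by omega)
      have hrow := rank_lt (X := cX) (Y := cY π) (PRel_iff π) (cY_inj π) hN hj h1
        (L.chain_flip hl hj) (by unfold cX; omega)
      simp only [cY] at hrow
      have htop := L.le_top (j := j + 1) (by omega)
      have hG : Ch (PRel π') (FBox π' a) (j + 1 + 1) c :=
        (L.chain' (j := j) (by omega)).succ ⟨hlt, by rw [hoff, hsh]; omega⟩
          ⟨by rw [hoff]; omega, by
            rw [L.symm_last]; exact h.trans_le (L.le_last (by omega))⟩
      exact L.backward_descend hl hN hN' (s - (j + 1)) (j + 1) (by omega) c hcx h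
        (fun hjs => L.backward_row hN' hjs hcx h hG) hG h2
    · obtain ⟨d, hd, hdr⟩ := h1.inv
      have := ih (by omega) d hd (by
        have := h2.succ (show flip (PRel π) c d from hdr) hd.mem
        rwa [show s + 1 - (j + 1) + 1 = s + 1 - j by omega] at this)
      have := hdr.1
      omega

/-- The unshifted chain of `π'` is the least `(s + 1)`-chain of `π`. -/
lemma backward_min (L : Link π π' s a x) (hl : (x s : ℕ) < lam a)
    (hN : ∀ c, ¬ Ch (PRel π) (JBox lam π a) (s + 1 + 1) c)
    (hN' : ∀ c, ¬ Ch (PRel π') (FBox π' a) (s + 1) c)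
    (hT : ∀ c, Ch (flip (PRel π)) (JBox lam π a) (s + 1) c → π c = a) :
    MinChain cX (cY π) (PRel π) (JBox lam π a) (s + 1) x where
  g j hj := L.chain hl hj
  e j hj := L.chain_flip hl hj
  minX j hj c h1 h2 := by
    have := L.backward_col hl hN hN' hT j hj c h1 h2
    simp only [cX]; omega
  minY j hj c h1 h2 := by
    have := L.backward_col hl hN hN' hT j hj c h1 h2
    rcases this.eq_or_lt with h | h
    · rw [eq_of_val h]
    · exact (rank_lt (X := cX) (Y := cY π) (PRel_iff π) (cY_inj π) hN hj (L.chain hl hj) h2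
        (by unfold cX; omega)).le
  step j hj := ⟨L.mono j (by omega), L.anti j (by omega)⟩

end Link

/-! ### The correspondence at one row -/

section
variable {n : ℕ} {π π' : Equiv.Perm (Fin n)} {s : ℕ} {a : Fin n} {lam : Fin n → ℕ}

lemma isTransversal_iff : IsTransversal lam π ↔ ∀ c : Fin n, (c : ℕ) + 1 ≤ lam (π c) := by
  refine ⟨fun h c => by simpa using h (π c), fun h v => by simpa using h (π.symm v)⟩

lemma flip_le {K : Fin n → Prop} {k : ℕ} {d : Fin n} (h : Ch (flip (PRel π)) K k d) :
    Ch (flip (PRel π)) (fun c => K c ∧ (π c : ℕ) ≤ π d) k d := by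
  induction h with
  | one h => exact .one ⟨h, le_rfl⟩
  | @succ k c d h1 h2 h3 ih =>
    exact .succ (ih.mono fun e he => ⟨he.1, he.2.trans h2.2.le⟩) h2 ⟨h3, le_rfl⟩

/-- If no long decreasing chain fits below row `a`, then every one in the rectangle of row `a`
starts in row `a`, since its rectangle can be taken to be that of its first point. -/
lemma row_top (hlam : Antitone lam) (h : ∀ b < a, ¬ JIn lam s π b) {c : Fin n}
    (hc : Ch (flip (PRel π)) (JBox lam π a) (s + 1) c) : π c = a := by
  rcases hc.mem.1.eq_or_lt with h1 | h1
  · exact eq_of_val h1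
  · exfalso
    have h2 : π c < a := h1
    refine h _ h2 (Ch.rev ((flip_le hc).mono fun d hd => ⟨hd.2, ?_⟩))
    exact hd.1.2.trans_le (hlam h2.le)

lemma no_chain_J (hlam : Antitone lam) (h : ∀ b < a, ¬ JIn lam s π b) (c : Fin n) :
    ¬ Ch (PRel π) (JBox lam π a) (s + 1 + 1) c := by
  intro hc
  obtain ⟨e, he⟩ := Ch.rev (r := flip (PRel π)) hc
  obtain ⟨d, hd, hde⟩ := he.inv
  have h1 := row_top hlam h hd
  have h2 : (π d : ℕ) < π e := hde.2
  have h3 := he.mem.1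
  rw [h1] at h2; omega

lemma no_chain_F (hlam : Antitone lam) (hπ : IsTransversal lam π)
    (h : ∀ b < a, ¬ JIn lam s π b) (c : Fin n) : ¬ Ch (PRel π) (FBox π a) (s + 1) c := by
  intro hc
  obtain ⟨e, he⟩ := Ch.rev (r := flip (PRel π)) hc
  have h1 : π e < a := he.mem.1
  refine h _ h1 (Ch.rev ((flip_le he).mono fun d hd => ⟨hd.2, ?_⟩))
  have h2 := hd.1.2
  have h3 := hπ a
  have h4 := hlam h1.le
  omega

/-- Even transversals in which no occurrence of the decreasing pattern fits below row `a`,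
and no occurrence of `s ⋯ 2 1 (s + 1)` ends above row `a`. -/
def Base (lam : Fin n → ℕ) (s : ℕ) (a : Fin n) (π : Equiv.Perm (Fin n)) : Prop :=
  (IsTransversal lam π ∧ Equiv.Perm.sign π = 1) ∧ (∀ b < a, ¬ JIn lam s π b) ∧
    ∀ b, a < b → ¬ FIn s π b

/-- `π'` arises from `π` by shifting the least `(s + 1)`-chain of `π` in the rectangle of row
`a`, which becomes the greatest `s`-chain to the lower left of the point of `π'` in row `a`. -/
def Shifted (lam : Fin n → ℕ) (s : ℕ) (a : Fin n) (π π' : Equiv.Perm (Fin n)) : Prop :=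
  ∃ x, Link π π' s a x ∧ MinChain cX (cY π) (PRel π) (JBox lam π a) (s + 1) x ∧
    MinChain (fun c => -cY π' c) (fun c => -cX c) (PRel π') (FBox π' a) s x

lemma strictMono_of_step {x : ℕ → Fin n} (h : ∀ j < s, (x j : ℕ) < x (j + 1)) {i j : ℕ}
    (hij : i < j) (hj : j ≤ s) : (x i : ℕ) < x j := by
  induction j, hij using Nat.le_induction with
  | base => exact h i hj
  | succ j _ ih => exact (ih (by omega)).trans (h j hj)

/-- A cycle of odd length `s + 1` along a sequence is an even permutation. -/
lemma exists_cycle (hs : Even s) {x : ℕ → Fin n} (h : ∀ j < s, (x j : ℕ) < x (j + 1)) :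
    ∃ σ : Equiv.Perm (Fin n), Equiv.Perm.sign σ = 1 ∧ (∀ j < s, σ (x j) = x (j + 1)) ∧
      σ (x s) = x 0 ∧ ∀ c, (∀ j < s + 1, c ≠ x j) → σ c = c := by
  have hinj : Function.Injective (fun i : Fin (s + 1) => x i) := by
    intro i j hij
    rcases lt_trichotomy i j with h1 | h1 | h1
    · have := strictMono_of_step h (i := i) (j := j) h1 (by omega)
      simp only at hij; rw [hij] at this; omega
    · exact h1
    · have := strictMono_of_step h (i := j) (j := i) h1 (by omega)
      simp only at hij; rw [hij] at this; omega
  let f : Fin (s + 1) ↪ Fin n := ⟨_, hinj⟩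
  have hf : ∀ i, f i = x i := fun _ => rfl
  refine ⟨(finRotate (s + 1)).viaFintypeEmbedding f, ?_, fun j hj => ?_, ?_, fun c hc => ?_⟩
  · rw [Equiv.Perm.viaFintypeEmbedding_sign, sign_finRotate, Nat.add_sub_cancel, hs.neg_one_pow]
  · have := (finRotate (s + 1)).viaFintypeEmbedding_apply_image f ⟨j, by omega⟩
    rw [finRotate_of_lt hj] at this
    exact this
  · have := (finRotate (s + 1)).viaFintypeEmbedding_apply_image f (Fin.last s)
    rw [finRotate_last] at this
    exact this
  · refine (finRotate (s + 1)).viaFintypeEmbedding_apply_notMem_range f ?_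
    rintro ⟨i, rfl⟩
    exact hc i i.2 rfl

lemma exists_forward (hlam : Antitone lam) (hs : Even s) (hs0 : 0 < s) (hW : Base lam s a π)
    (hJ : JIn lam s π a) : ∃ π', (Base lam s a π' ∧ FIn s π' a) ∧ Shifted lam s a π π' := by
  obtain ⟨⟨hT, hsg⟩, hb, hf⟩ := hW
  have hN := no_chain_J hlam hb
  obtain ⟨x, M⟩ := exists_minChain (X := cX) (Y := cY π) (PRel_iff π) cX_inj (cY_inj π) hN hJ
  obtain ⟨σ, h1, h2, h3, h4⟩ := exists_cycle hs (x := x) fun j hj => (M.step j (by omega)).1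
  have hl : (x s : ℕ) < lam a := (M.g s (by omega)).mem.2
  have L : Link π (π * σ) s a x :=
    { mono := fun j hj => (M.step j (by omega)).1
      anti := fun j hj => (M.step j (by omega)).2
      top := row_top hlam hb (M.e 0 (by omega))
      shift := fun j hj => by rw [Equiv.Perm.mul_apply, h2 j hj]
      last := by rw [Equiv.Perm.mul_apply, h3]; exact row_top hlam hb (M.e 0 (by omega))
      off := fun c hc => by rw [Equiv.Perm.mul_apply, h4 c hc] }
  have hT' : IsTransversal lam (π * σ) := by
    rw [isTransversal_iff] at hT ⊢
    intro c
    by_cases hc : ∃ j < s + 1, c = x j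
    · obtain ⟨j, hj, rfl⟩ := hc
      rcases Nat.lt_or_ge j s with hjs | hjs
      · rw [L.shift j hjs]
        have := hT (x (j + 1))
        have := L.mono j hjs
        omega
      · obtain rfl : j = s := by omega
        rw [L.last]; exact hl
    · push Not at hc
      rw [L.off c hc]; exact hT c
  have hb' : ∀ b < a, ¬ JIn lam s (π * σ) b := fun b hba => L.forward_J hlam M hba (hb b hba)
  refine ⟨π * σ, ⟨⟨⟨hT', by rw [Equiv.Perm.sign_mul, hsg, h1, one_mul]⟩, hb',
    fun b hab => L.forward_F hs0 M hab (hf b hab)⟩, ⟨x (s - 1), ?_⟩⟩,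
    ⟨x, L, M, L.forward_min hl hN (no_chain_F hlam hT' hb')⟩⟩
  · have := L.chain' (j := s - 1) (by omega)
    rwa [show s - 1 + 1 = s by omega] at this

lemma exists_backward (hlam : Antitone lam) (hs : Even s) (hs0 : 0 < s) (hW : Base lam s a π')
    (hF : FIn s π' a) : ∃ π, (Base lam s a π ∧ JIn lam s π a) ∧ Shifted lam s a π π' := by
  obtain ⟨⟨hT, hsg⟩, hb, hf⟩ := hW
  have hN' := no_chain_F hlam hT hb
  obtain ⟨y, My⟩ := exists_minChain (X := fun c => -cY π' c) (Y := fun c => -cX c)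
    (PRel_iff_neg π') (fun c d h => cY_inj π' (neg_injective h))
    (fun c d h => cX_inj (neg_injective h)) hN' hF
  obtain ⟨x, hx, hxs⟩ : ∃ x : ℕ → Fin n, (∀ j < s, x j = y j) ∧ x s = π'.symm a :=
    ⟨fun j => if j < s then y j else π'.symm a, fun j hj => by simp [hj], by simp⟩
  have M : MinChain (fun c => -cY π' c) (fun c => -cX c) (PRel π') (FBox π' a) s x :=
    { g := fun j hj => by rw [hx j hj]; exact My.g j hj
      e := fun j hj => by rw [hx j hj]; exact My.e j hj
      minX := fun j hj => by rw [hx j hj]; exact My.minX j hj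
      minY := fun j hj => by rw [hx j hj]; exact My.minY j hj
      step := fun j hj => by rw [hx j (by omega), hx (j + 1) hj]; exact My.step j hj }
  have hmono : ∀ j < s, (x j : ℕ) < x (j + 1) := fun j hj => by
    rcases Nat.lt_or_ge (j + 1) s with h | h
    · exact (M.step j h).1
    · have := (M.g j hj).mem.2
      rwa [show j + 1 = s by omega, hxs]
  obtain ⟨σ, h1, h2, h3, h4⟩ := exists_cycle hs hmono
  have hlast : π' (x s) = a := by rw [hxs]; simp
  have hp0 : (π' * σ⁻¹) (x 0) = a := by
    rw [Equiv.Perm.mul_apply, Equiv.Perm.inv_eq_iff_eq.2 h3.symm, hlast]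
  have hp : ∀ j < s, (π' * σ⁻¹) (x (j + 1)) = π' (x j) := fun j hj => by
    rw [Equiv.Perm.mul_apply, Equiv.Perm.inv_eq_iff_eq.2 (h2 j hj).symm]
  have hoff : ∀ c, (∀ j < s + 1, c ≠ x j) → (π' * σ⁻¹) c = π' c := fun c hc => by
    have : σ⁻¹ c = c := by rw [Equiv.Perm.inv_eq_iff_eq, h4 c hc]
    rw [Equiv.Perm.mul_apply, this]
  generalize hπ : π' * σ⁻¹ = π at hp0 hp hoff
  have L : Link π π' s a x :=
    { mono := hmono
      anti := fun j hj => by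
        rw [hp j hj]
        rcases j with _ | j
        · rw [hp0]; exact (M.g 0 hj).mem.1
        · rw [hp j (by omega)]; exact (M.step j hj).2
      top := hp0
      shift := fun j hj => (hp j hj).symm
      last := hlast
      off := fun c hc => (hoff c hc).symm }
  have hl : (x s : ℕ) < lam a := by have := hT a; rw [hxs]; omega
  have hT' : IsTransversal lam π := by
    rw [isTransversal_iff] at hT ⊢
    intro c
    by_cases hc : ∃ j < s + 1, c = x j
    · obtain ⟨j, hj, rfl⟩ := hc
      have h5 : π (x j) ≤ a := L.le_top (j := j) (by omega)
      have h6 := hlam h5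
      have h7 := L.le_last (j := j) (by omega)
      omega
    · push Not at hc
      rw [hoff c hc]; exact hT c
  have hb' : ∀ b < a, ¬ JIn lam s π b := fun b hba => L.backward_J hlam hl M hba (hb b hba)
  refine ⟨π, ⟨⟨⟨hT', ?_⟩, hb', fun b hab => L.backward_F hs0 M hab (hf b hab)⟩,
    ⟨_, L.chain hl (j := s) (by omega)⟩⟩,
    ⟨x, L, L.backward_min hl (no_chain_J hlam hb') hN' fun c hc => row_top hlam hb' hc, M⟩⟩
  rw [← hπ, Equiv.Perm.sign_mul, Equiv.Perm.sign_inv, hsg, h1, one_mul]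

lemma Shifted.right_unique {π₁ π₂ : Equiv.Perm (Fin n)} (h₁ : Shifted lam s a π π₁)
    (h₂ : Shifted lam s a π π₂) : π₁ = π₂ := by
  obtain ⟨x, L, M, -⟩ := h₁
  obtain ⟨y, L', M', -⟩ := h₂
  have hxy : ∀ j < s + 1, x j = y j := fun j hj => cX_inj (le_antisymm
    (M.minX j hj _ (M'.g j hj) (M'.e j hj)) (M'.minX j hj _ (M.g j hj) (M.e j hj)))
  ext1 c
  by_cases hc : ∃ j < s + 1, c = x j
  · obtain ⟨j, hj, rfl⟩ := hc
    rcases Nat.lt_or_ge j s with hjs | hjs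
    · rw [L.shift j hjs, hxy j hj, L'.shift j hjs, hxy (j + 1) (by omega)]
    · obtain rfl : j = s := by omega
      rw [L.last, hxy j hj, L'.last]
  · push Not at hc
    rw [L.off c hc, L'.off c fun j hj => by rw [← hxy j hj]; exact hc j hj]

lemma Shifted.left_unique {π₁ π₂ : Equiv.Perm (Fin n)} (h₁ : Shifted lam s a π₁ π')
    (h₂ : Shifted lam s a π₂ π') : π₁ = π₂ := by
  obtain ⟨x, L, -, M⟩ := h₁
  obtain ⟨y, L', -, M'⟩ := h₂
  have hxy : ∀ j < s + 1, x j = y j := fun j hj => by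
    rcases Nat.lt_or_ge j s with hjs | hjs
    · exact cX_inj (neg_injective (le_antisymm (M.minY j hjs _ (M'.g j hjs) (M'.e j hjs))
        (M'.minY j hjs _ (M.g j hjs) (M.e j hjs))))
    · obtain rfl : j = s := by omega
      rw [← L.symm_last, L'.symm_last]
  ext1 c
  by_cases hc : ∃ j < s + 1, c = x j
  · obtain ⟨j, hj, rfl⟩ := hc
    rcases j with _ | j
    · rw [L.top, hxy 0 hj, L'.top]
    · rw [← L.shift j (by omega), hxy (j + 1) hj, ← L'.shift j (by omega), hxy j (by omega)]
  · push Not at hc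
    rw [← L.off c hc, ← L'.off c fun j hj => by rw [← hxy j hj]; exact hc j hj]

/-- The transversals of `Base` with, and hence also those without, an occurrence of either
pattern at row `a` are equinumerous. -/
lemma card_row (hlam : Antitone lam) (hs : Even s) (hs0 : 0 < s) (a : Fin n) :
    Nat.card {π // Base lam s a π ∧ ¬ FIn s π a} =
      Nat.card {π // Base lam s a π ∧ ¬ JIn lam s π a} := by
  classical
  simp only [Nat.card_eq_fintype_card, Fintype.card_subtype]
  have h : (Finset.univ.filter fun π => Base lam s a π ∧ JIn lam s π a).card =
      (Finset.univ.filter fun π => Base lam s a π ∧ FIn s π a).card := by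
    refine le_antisymm
      (Finset.card_le_card_of_forall_subsingleton (Shifted lam s a) (fun π hπ => ?_) ?_)
      (Finset.card_le_card_of_forall_subsingleton (fun π' π => Shifted lam s a π π')
        (fun π' hπ => ?_) ?_)
    · simp only [Finset.mem_filter_univ] at hπ ⊢
      exact exists_forward hlam hs hs0 hπ.1 hπ.2
    · exact fun π' _ π₁ h₁ π₂ h₂ => h₁.2.left_unique h₂.2
    · simp only [Finset.mem_filter_univ] at hπ ⊢
      exact exists_backward hlam hs hs0 hπ.1 hπ.2
    · exact fun π _ π₁ h₁ π₂ h₂ => h₁.2.right_unique h₂.2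
  have h1 := Finset.card_filter_add_card_filter_not
    (s := Finset.univ.filter fun π => Base lam s a π) (fun π => JIn lam s π a)
  have h2 := Finset.card_filter_add_card_filter_not
    (s := Finset.univ.filter fun π => Base lam s a π) (fun π => FIn s π a)
  simp only [Finset.filter_filter] at h1 h2
  omega

end

/-! ### Pattern containment by rows -/

section
variable {n : ℕ} {π : Equiv.Perm (Fin n)} {s : ℕ} {lam : Fin n → ℕ}

lemma PRel_of_step {x : ℕ → Fin n} {N : ℕ} (h : ∀ i, i + 1 < N → PRel π (x i) (x (i + 1)))
    {i j : ℕ} (hij : i < j) (hj : j < N) : PRel π (x i) (x j) := by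
  induction j, hij using Nat.le_induction with
  | base => exact h i hj
  | succ j _ ih =>
    have h1 := ih (by omega)
    have h2 := h j hj
    exact ⟨h1.1.trans h2.1, h2.2.trans h1.2⟩

lemma contains_J_iff (hlam : Antitone lam) :
    TransversalContains lam (Jpat (s + 1)) π ↔ ∃ b, JIn lam s π b := by
  constructor
  · rintro ⟨f, hf, hord, hcell⟩
    have hord' : ∀ i j, π (f i) < π (f j) ↔ j < i := fun i j => by
      rw [hord]; exact Fin.rev_lt_rev
    let x : ℕ → Fin n := fun i => if h : i < s + 1 then f ⟨i, h⟩ else f 0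
    have hx : ∀ i (h : i < s + 1), x i = f ⟨i, h⟩ := fun i h => dif_pos h
    refine ⟨π (f 0), x s, Ch.of_seq (N := s + 1) (fun i hi => ?_) (fun i hi => ?_) s (by omega)⟩
    · rw [hx i hi]
      refine ⟨?_, hcell _ _⟩
      have := (hord' 0 ⟨i, hi⟩).not.2 (Fin.not_lt_zero _)
      exact not_lt.1 this
    · rw [hx i (by omega), hx (i + 1) hi]
      have h : (⟨i, by omega⟩ : Fin (s + 1)) < ⟨i + 1, hi⟩ := Nat.lt_succ_self i
      exact ⟨hf h, (hord' _ _).2 h⟩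
  · rintro ⟨b, c, hc⟩
    obtain ⟨f, -, hK, hr⟩ := hc.to_seq
    have hlt : ∀ i j : Fin (s + 1), i < j → PRel π (f i) (f j) :=
      fun i j hij => PRel_of_step hr hij j.2
    refine ⟨fun i => f i, fun i j hij => (hlt i j hij).1, fun i j => ?_, fun i j => ?_⟩
    · rw [show Jpat (s + 1) i < Jpat (s + 1) j ↔ j < i from Fin.rev_lt_rev]
      have hanti : StrictAnti fun i : Fin (s + 1) => π (f i) := fun i j hij => (hlt i j hij).2
      exact hanti.lt_iff_gt
    · have h1 : π (f j) ≤ b := (hK j j.2).1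
      exact (hK i i.2).2.trans_le (hlam h1)

lemma Fpat_lt_last {i : Fin (s + 1)} (h : (i : ℕ) < s) :
    Fpat (s + 1) i < Fpat (s + 1) (Fin.last s) := by
  simp only [Fpat, Equiv.coe_fn_mk, Fin.lt_def, Fin.val_last, if_true]
  rw [if_neg (by omega)]
  simp only
  omega

lemma Fpat_lt_iff {i j : Fin (s + 1)} (hi : (i : ℕ) < s) (hj : (j : ℕ) < s) :
    Fpat (s + 1) i < Fpat (s + 1) j ↔ j < i := by
  simp only [Fpat, Equiv.coe_fn_mk, Fin.lt_def]
  rw [if_neg (by omega), if_neg (by omega)]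
  simp only
  omega

lemma contains_F_iff (hlam : Antitone lam) (hs0 : 0 < s) (hπ : IsTransversal lam π) :
    TransversalContains lam (Fpat (s + 1)) π ↔ ∃ b, FIn s π b := by
  constructor
  · rintro ⟨f, hf, hord, -⟩
    let x : ℕ → Fin n := fun i => if h : i < s + 1 then f ⟨i, h⟩ else f 0
    have hx : ∀ i (h : i < s + 1), x i = f ⟨i, h⟩ := fun i h => dif_pos h
    have H := Ch.of_seq (r := PRel π) (K := FBox π (π (f (Fin.last s)))) (x := x) (N := s)
      (fun i hi => ?_) (fun i hi => ?_) (s - 1) (by omega)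
    · rw [show s - 1 + 1 = s by omega] at H
      exact ⟨_, _, H⟩
    · rw [hx i (by omega)]
      refine ⟨(hord _ _).2 (Fpat_lt_last hi), ?_⟩
      rw [Equiv.symm_apply_apply]
      exact hf (show (⟨i, by omega⟩ : Fin (s + 1)) < Fin.last s from hi)
    · rw [hx i (by omega), hx (i + 1) (by omega)]
      have h : (⟨i, by omega⟩ : Fin (s + 1)) < ⟨i + 1, by omega⟩ := Nat.lt_succ_self i
      exact ⟨hf h, (hord _ _).2 ((Fpat_lt_iff hi (by simp only; omega)).2 h)⟩
  · rintro ⟨b, c, hc⟩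
    obtain ⟨g, -, hK, hr⟩ := hc.to_seq
    obtain ⟨f, hf, hfs⟩ : ∃ f : Fin (s + 1) → Fin n,
        (∀ i : Fin (s + 1), (i : ℕ) < s → f i = g i) ∧
        ∀ i : Fin (s + 1), ¬ (i : ℕ) < s → f i = π.symm b :=
      ⟨fun i => if (i : ℕ) < s then g i else π.symm b, fun i hi => if_pos hi,
        fun i hi => if_neg hi⟩
    have hlast : ∀ i : Fin (s + 1), ¬ (i : ℕ) < s → i = Fin.last s := fun i hi =>
      Fin.ext (by rw [Fin.val_last]; omega)
    refine ⟨f, fun i j hij => ?_, fun i j => ?_, fun i j => ?_⟩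
    · have hi : (i : ℕ) < s := by have := j.2; have : (i : ℕ) < j := hij; omega
      rw [hf i hi]
      by_cases hj : (j : ℕ) < s
      · rw [hf j hj]; exact (PRel_of_step hr hij hj).1
      · rw [hfs j hj]; exact (hK i hi).2
    · by_cases hi : (i : ℕ) < s <;> by_cases hj : (j : ℕ) < s
      · rw [hf i hi, hf j hj, Fpat_lt_iff hi hj]
        rcases lt_trichotomy (i : ℕ) j with h | h | h
        · have h1 : ¬ π (g i) < π (g j) := not_lt.2 (PRel_of_step hr h hj).2.le
          have h2 : ¬ j < i := not_lt.2 h.le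
          tauto
        · obtain rfl : i = j := Fin.ext h
          simp
        · have h1 : π (g i) < π (g j) := (PRel_of_step hr h hi).2
          have h2 : j < i := h
          tauto
      · have h1 : π (g i) < b := (hK i hi).1
        have h2 := Fpat_lt_last hi
        rw [hf i hi, hfs j hj, hlast j hj, Equiv.apply_symm_apply]
        tauto
      · have h1 : π (g j) < b := (hK j hj).1
        have h2 := Fpat_lt_last hj
        rw [hf j hj, hfs i hi, hlast i hi, Equiv.apply_symm_apply]
        exact iff_of_false (lt_asymm h1) (lt_asymm h2)
      · rw [hfs i hi, hfs j hj, hlast i hi, hlast j hj]; simp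
    · have h1 : (f i : ℕ) ≤ π.symm b := by
        by_cases hi : (i : ℕ) < s
        · rw [hf i hi]; exact (hK i hi).2.le
        · rw [hfs i hi]
      have h2 : π (f j) ≤ b := by
        by_cases hj : (j : ℕ) < s
        · rw [hf j hj]; exact (hK j hj).1.le
        · rw [hfs j hj, Equiv.apply_symm_apply]
      have := hπ b
      have := hlam h2
      omega

/-- Interpolation between avoiders of the two patterns: rows below `m` are tested for the
decreasing pattern and the remaining ones for the other pattern. -/
def Mixed (lam : Fin n → ℕ) (s m : ℕ) (π : Equiv.Perm (Fin n)) : Prop :=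
  (IsTransversal lam π ∧ Equiv.Perm.sign π = 1) ∧ (∀ b : Fin n, (b : ℕ) < m → ¬ JIn lam s π b) ∧
    ∀ b : Fin n, m ≤ b → ¬ FIn s π b

lemma card_mixed (hlam : Antitone lam) (hs : Even s) (hs0 : 0 < s) :
    ∀ m ≤ n, Nat.card {π // Mixed lam s 0 π} = Nat.card {π // Mixed lam s m π} := by
  intro m
  induction m with
  | zero => intro _; rfl
  | succ m ih =>
    intro hm
    rw [ih (by omega)]
    let a : Fin n := ⟨m, hm⟩
    have hF : ∀ π, Mixed lam s m π ↔ Base lam s a π ∧ ¬ FIn s π a := fun π => by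
      constructor
      · rintro ⟨h1, h2, h3⟩
        exact ⟨⟨h1, fun b hb => h2 b hb, fun b hb => h3 b (le_of_lt hb)⟩, h3 a le_rfl⟩
      · rintro ⟨⟨h1, h2, h3⟩, h4⟩
        refine ⟨h1, fun b hb => h2 b hb, fun b hb => ?_⟩
        rcases hb.eq_or_lt with h | h
        · obtain rfl : a = b := Fin.ext h
          exact h4
        · exact h3 b h
    have hJ : ∀ π, Mixed lam s (m + 1) π ↔ Base lam s a π ∧ ¬ JIn lam s π a := fun π => by
      constructor
      · rintro ⟨h1, h2, h3⟩
        exact ⟨⟨h1, fun b hb => h2 b (Nat.lt_succ_of_lt hb), fun b hb => h3 b hb⟩,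
          h2 a (Nat.lt_succ_self m)⟩
      · rintro ⟨⟨h1, h2, h3⟩, h4⟩
        refine ⟨h1, fun b hb => ?_, fun b hb => h3 b hb⟩
        rcases (Nat.le_of_lt_succ hb).eq_or_lt with h | h
        · obtain rfl : b = a := Fin.ext h
          exact h4
        · exact h2 b h
    simp only [hF, hJ]
    exact card_row hlam hs hs0 a

end

/-! ### Even-shape-Wilf-equivalence -/

/-- For every odd positive `t`, the patterns `J_t` and `F_t` are even-shape-Wilf-equivalent. -/
theorem stmt10 (t : ℕ) (ht : Odd t) (hpos : 0 < t) :
    EvenShapeWilfEquiv (Jpat t) (Fpat t) := by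
  obtain ⟨k, rfl⟩ := ht
  intro n lam hlam
  rcases Nat.eq_zero_or_pos k with rfl | hk
  · have : Subsingleton (Equiv.Perm (Fin (2 * 0 + 1))) :=
      inferInstanceAs (Subsingleton (Equiv.Perm (Fin 1)))
    rw [Subsingleton.elim (Jpat (2 * 0 + 1)) (Fpat (2 * 0 + 1))]
  have hs : Even (2 * k) := even_two_mul k
  have hJ : ∀ π : Equiv.Perm (Fin n), (IsTransversal lam π ∧ Equiv.Perm.sign π = 1 ∧
      ¬ TransversalContains lam (Jpat (2 * k + 1)) π) ↔ Mixed lam (2 * k) n π := fun π => by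
    rw [contains_J_iff hlam, not_exists, ← and_assoc]
    exact and_congr_right fun _ => ⟨fun h => ⟨fun b _ => h b, fun b hb => absurd b.2 (by omega)⟩,
      fun h b => h.1 b b.2⟩
  have hF : ∀ π : Equiv.Perm (Fin n), (IsTransversal lam π ∧ Equiv.Perm.sign π = 1 ∧
      ¬ TransversalContains lam (Fpat (2 * k + 1)) π) ↔ Mixed lam (2 * k) 0 π := fun π => by
    rw [← and_assoc]
    refine and_congr_right fun h => ?_
    rw [contains_F_iff hlam (by omega) h.1, not_exists]
    exact ⟨fun h => ⟨fun b hb => absurd hb (by omega), fun b _ => h b⟩,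
      fun h b => h.2 b (Nat.zero_le _)⟩
  unfold eavShape
  simp only [hJ, hF]
  exact (card_mixed hlam hs (by omega) n le_rfl).symm
end

section
/- The patterns 3214, 1432, 2134, and 1243 are pairwise even-Wilf-equivalent: for all n ≥ 0, eav_n(3214) = eav_n(1432) = eav_n(2134) = eav_n(1243). -/
/-!
Reverse-complement is conjugation by the reversal of `Fin n`, so it preserves signs; it exchanges
`3214` with `1432` and `2134` with `1243`. What remains is `2134 ~ 3214`, which is the case
`213 ⊕ 1 ~ 321 ⊕ 1` of the theorem of Backelin, West and Xin. Their bijection replaces a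
`3 2 1` by a `2 1 3` in the same positions, which is a 3-cycle of positions and hence even.

The proof interpolates between the two classes one cell at a time. A permutation is in the hybrid
class `Hybrid x m` if it has no `3214` whose "3" has value below `x`, no `2134` whose "3" has value
above `x`, and, for occurrences whose "3" is the value `x` itself, no `3214` with its "1" in a
position below `m` and no `2134` with its "3" in a position from `m` on. Then `Hybrid 0 0` is the
class of `2134`-avoiders, `Hybrid n 0` is the class of `3214`-avoiders, and `Hybrid x n` is
`Hybrid (x + 1) 0`.

In passing from `m` to `m + 1` the permutations lost are those of shape `A x B y C z D …`, where
`z` is in position `m`, some larger value than `x` comes later, and among the values below `x` one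
has `B < z < y < C` with `B y C` increasing (values above `x` may be interspersed anywhere). The
permutations gained are those of shape `A y B z C x D …` with the same inequalities. So the 3-cycle
`x y z → y z x` matches them (`Source.target`, `Target.source`). On the values below `x` it is
`B y C z → y B z C`, the row insertion of `z` bumping `y`; `lo_forward`, `lo_backward`,
`hi_forward` and `hi_backward` say that it respects the remaining avoidance conditions. The
positions of `x`, `y`, `z` can be recovered on either side (`Source.unique`, `Target.unique`), so
even permutations lost and gained are equinumerous (`card_step`).
-/

/-- A permutation `π` contains the pattern `σ` if some subsequence of `π`
(given by a strictly increasing choice of indices) is order-isomorphic to `σ`. -/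
def Pattern.Contains {k n : ℕ} (σ : Equiv.Perm (Fin k)) (π : Equiv.Perm (Fin n)) : Prop :=
  ∃ f : Fin k → Fin n, StrictMono f ∧ ∀ a b : Fin k, π (f a) < π (f b) ↔ σ a < σ b

/-- `π` avoids the pattern `σ`. -/
def Pattern.Avoids {k n : ℕ} (σ : Equiv.Perm (Fin k)) (π : Equiv.Perm (Fin n)) : Prop :=
  ¬ Pattern.Contains σ π

/-- `eav n σ`: the number of even permutations of length `n` avoiding `σ`. -/
noncomputable def eav (n : ℕ) {k : ℕ} (σ : Equiv.Perm (Fin k)) : ℕ :=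
  Nat.card {π : Equiv.Perm (Fin n) // Equiv.Perm.sign π = 1 ∧ Pattern.Avoids σ π}

/-- Even-Wilf-equivalence: the same number of even avoiders of every length. -/
def EvenWilfEquiv {k l : ℕ} (σ : Equiv.Perm (Fin k)) (τ : Equiv.Perm (Fin l)) : Prop :=
  ∀ n : ℕ, eav n σ = eav n τ

/-- The pattern `3214` (one-line notation, 1-indexed). -/
def p3214 : Equiv.Perm (Fin 4) :=
  ⟨![2,1,0,3], ![2,1,0,3], by decide, by decide⟩

/-- The pattern `1432` (one-line notation, 1-indexed). -/
def p1432 : Equiv.Perm (Fin 4) :=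
  ⟨![0,3,2,1], ![0,3,2,1], by decide, by decide⟩

/-- The pattern `2134` (one-line notation, 1-indexed). -/
def p2134 : Equiv.Perm (Fin 4) :=
  ⟨![1,0,2,3], ![1,0,2,3], by decide, by decide⟩

/-- The pattern `1243` (one-line notation, 1-indexed). -/
def p1243 : Equiv.Perm (Fin 4) :=
  ⟨![0,1,3,2], ![0,1,3,2], by decide, by decide⟩

namespace EvenWilf

variable {n : ℕ}

/-! ### Hybrid classes and the two shapes -/

/-- No occurrence of `3214` in the word `p` has its "3" of value less than `x`. -/
def No3214 (x : ℕ) (p : Fin n → ℕ) : Prop :=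
  ∀ a b c d : Fin n, a < b → b < c → c < d → p c < p b → p b < p a → p a < p d → x ≤ p a

/-- No occurrence of `2134` in the word `p` has its "3" of value greater than `x`. -/
def No2134 (x : ℕ) (p : Fin n → ℕ) : Prop :=
  ∀ a b c d : Fin n, a < b → b < c → c < d → p b < p a → p a < p c → p c < p d → p c ≤ x

/-- The class interpolating between avoidance of `2134` and of `3214`: values below `x` obey the
`3214` condition as the "3" of a pattern, values above `x` the `2134` condition, and for the value
`x` the condition switches at position `m`. If `x` stands at a position `≥ m` then `left` is vacuous,
and if it stands at a position `< m` then `right` is. -/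
structure Hybrid (x m : ℕ) (p : Fin n → ℕ) : Prop where
  lo : No3214 x p
  hi : No2134 x p
  left : ∀ a b c d : Fin n, a < b → b < c → c < d → p c < p b → p b < p a → p a < p d →
    p a = x → m ≤ (c : ℕ)
  right : ∀ a b c d : Fin n, a < b → b < c → c < d → p b < p a → p a < p c → p c < p d →
    p c = x → (c : ℕ) < m

/-- The word `p` has the shape `A x B y C z …` with `x`, `y`, `z` in positions `c`, `j`, `m`, a value
above `x` after position `m`, and, among the values below `x`, `B < z < y` and `B y C` increasing. -/
structure Source (x : ℕ) (p : Fin n → ℕ) (c j m : Fin n) : Prop where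
  cj : c < j
  jm : j < m
  top : p c = x
  desc : p m < p j
  low : p j < x
  wit : ∃ t, m < t ∧ x < p t
  incr : ∀ a b, c < a → a < b → b < m → p a < x → p b < x → p a < p b
  small : ∀ a, c < a → a < j → p a < x → p a < p m

/-- The word `r` has the shape `A y B z C x …` with `y`, `z`, `x` in positions `c`, `j`, `m`, a value
above `x` after position `m`, and, among the values below `x`, `z < y < C` and `B z C` increasing. -/
structure Target (x : ℕ) (r : Fin n → ℕ) (c j m : Fin n) : Prop where
  cj : c < j
  jm : j < m
  top : r m = x
  desc : r j < r c
  low : r c < x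
  wit : ∃ t, m < t ∧ x < r t
  incr : ∀ a b, c < a → a < b → b < m → r a < x → r b < x → r a < r b
  large : ∀ a, j < a → a < m → r a < x → r c < r a

/-- `r` arises from `p` by cyclically moving the entries in positions `c`, `j`, `m`. -/
structure Shift (p r : Fin n → ℕ) (c j m : Fin n) : Prop where
  rc : r c = p j
  rj : r j = p m
  rm : r m = p c
  rest : ∀ a, a ≠ c → a ≠ j → a ≠ m → r a = p a

variable {x : ℕ} {p r : Fin n → ℕ} {c j m : Fin n}

theorem Source.target (h : Source x p c j m) (s : Shift p r c j m) : Target x r c j m := by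
  obtain ⟨cj, jm, top, desc, low, ⟨t, mt, xt⟩, incr, small⟩ := h
  obtain ⟨rc, rj, rm, rest⟩ := s
  refine ⟨cj, jm, by grind, by grind, by grind, ⟨t, mt, by grind⟩, ?_, ?_⟩
  · intro a b ca ab bm ha hb
    have := incr a b ca ab bm
    have := incr j b cj
    have := small a ca
    grind
  · intro a ja am ha
    have := incr j a cj ja am low
    grind

theorem Target.source (h : Target x r c j m) (s : Shift p r c j m) : Source x p c j m := by
  obtain ⟨cj, jm, top, desc, low, ⟨t, mt, xt⟩, incr, large⟩ := h
  obtain ⟨rc, rj, rm, rest⟩ := s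
  refine ⟨cj, jm, by grind, by grind, by grind, ⟨t, mt, by grind⟩, ?_, ?_⟩
  · intro a b ca ab bm ha hb
    have := incr a b ca ab bm
    have := incr a j ca
    have := large b
    grind
  · intro a ca aj ha
    have := incr a j ca aj jm
    grind

/-! ### The shift respects the remaining avoidance conditions -/

/-- An occurrence of `3214` in `r` yields one in `p` whose "3" is still below `x`. The "4" can be
taken after position `m`. The only descents of `y B z C` with values below `x` have `y` as
top and a value `≤ z` as bottom, and the descent `y … z` of `p` can replace them. -/
theorem lo_forward (h : Source x p c j m) (g : Target x r c j m) (s : Shift p r c j m)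
    (H : No3214 x p) : No3214 x r := by
  intro a b d e ab bd de h1 h2 h3
  by_contra! hx
  obtain ⟨cj, jm, top, desc, low, ⟨t, mt, xt⟩, incr, large⟩ := g
  obtain ⟨rc, rj, rm, rest⟩ := s
  have htop := h.top
  obtain ⟨e', me, de', he⟩ : ∃ e', m < e' ∧ d < e' ∧ r a < r e' := by
    rcases lt_or_ge d m with hd | hd
    · exact ⟨t, mt, by grind, by grind⟩
    · exact ⟨e, by grind, by grind, by grind⟩
  have rest' : ∀ a, a < c → r a = p a := fun a ha => by grind
  have rest2 : ∀ a, m < a → r a = p a := fun a ha => by grind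
  -- Small values in positions `c, …, m` reappear in that range of the other word.
  have inv : ∀ a, a ≤ m → r a < x → (c ≤ a ∧ ∃ a', c ≤ a' ∧ a' ≤ m ∧ p a' = r a) ∨ a < c := by
    intro a ha hax
    rcases lt_or_ge a c with hac | hac
    · right; exact hac
    · left
      refine ⟨hac, ?_⟩
      by_cases a = c
      · exact ⟨j, by grind⟩
      by_cases a = j
      · exact ⟨m, by grind⟩
      exact ⟨a, by grind⟩
  have re := rest2 e' me
  have key : ∀ a b d, a < b → b < d → d < e' → p d < p b → p b < p a → p a < x → p a < p e' → False := by
    intro a b d q1 q2 q3 q4 q5 q6 q7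
    have := H a b d e' q1 q2 q3 q4 q5 q7
    omega
  rcases lt_or_ge m d with hd | hd
  · rcases lt_or_ge m b with hb | hb
    · rcases lt_or_ge m a with ha | ha
      · exact key a b d ab bd de' (by grind) (by grind) (by grind) (by grind)
      · rcases inv a ha hx with ⟨-, a', h5, h6, h7⟩ | h5
        · exact key a' b d (by grind) bd de' (by grind) (by grind) (by grind) (by grind)
        · exact key a b d ab bd de' (by grind) (by grind) (by grind) (by grind)
    · rcases lt_or_ge a c with ha | ha
      · rcases inv b hb (by omega) with ⟨-, a', h5, h6, h7⟩ | h5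
        · exact key a a' d (by grind) (by grind) de' (by grind) (by grind) (by grind) (by grind)
        · exact key a b d ab bd de' (by grind) (by grind) (by grind) (by grind)
      · have hac : a = c := by
          have := incr a b
          grind
        have : r b ≤ r j := by
          have := incr b j
          have := large b
          grind
        exact key j m d jm hd de' (by grind) (by grind) (by grind) (by grind)
  · have ha : a < c := by
      have := incr b d
      have := incr a b
      grind
    rcases lt_or_ge b c with hb | hb
    · rcases inv d hd (by omega) with ⟨-, a', h5, h6, h7⟩ | h5
      · exact key a b a' (by grind) (by grind) (by grind) (by grind) (by grind) (by grind) (by grind)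
      · exact key a b d ab bd de' (by grind) (by grind) (by grind) (by grind)
    · have hac : b = c := by
        have := incr b d
        grind
      exact key a j m (by grind) (by grind) (by grind) (by grind) (by grind) (by grind) (by grind)

/-- The converse of `lo_forward`: the descents of `B y C z` with values below `x` have `z` as bottom
and a value `≥ y` as top, and the descent `y z` of `r` can replace them. -/
theorem lo_backward (h : Source x p c j m) (g : Target x r c j m) (s : Shift p r c j m)
    (H : No3214 x r) : No3214 x p := by
  intro a b d e ab bd de h1 h2 h3
  by_contra! hx
  have htop := g.top
  obtain ⟨cj, jm, top, desc, low, ⟨t, mt, xt⟩, incr, small⟩ := h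
  obtain ⟨rc, rj, rm, rest⟩ := s
  obtain ⟨e', me, de', he⟩ : ∃ e', m < e' ∧ d < e' ∧ p a < p e' := by
    rcases le_or_gt d m with hd | hd
    · exact ⟨t, mt, by grind, by grind⟩
    · exact ⟨e, by grind, by grind, by grind⟩
  have rest' : ∀ a, a < c → r a = p a := fun a ha => by grind
  have rest2 : ∀ a, m < a → r a = p a := fun a ha => by grind
  -- Small values in positions `c, …, m` reappear in that range of the other word.
  have inv : ∀ a, a ≤ m → p a < x → (c ≤ a ∧ ∃ a', c ≤ a' ∧ a' ≤ m ∧ r a' = p a) ∨ a < c := by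
    intro a ha hax
    rcases lt_or_ge a c with hac | hac
    · right; exact hac
    · left
      refine ⟨hac, ?_⟩
      by_cases a = j
      · exact ⟨c, by grind⟩
      by_cases a = m
      · exact ⟨j, by grind⟩
      exact ⟨a, by grind⟩
  have re := rest2 e' me
  have key : ∀ a b d, a < b → b < d → d < e' → r d < r b → r b < r a → r a < x → r a < r e' → False := by
    intro a b d q1 q2 q3 q4 q5 q6 q7
    have := H a b d e' q1 q2 q3 q4 q5 q7
    omega
  rcases lt_or_ge m d with hd | hd
  · rcases lt_or_ge m b with hb | hb
    · rcases lt_or_ge m a with ha | ha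
      · exact key a b d ab bd de' (by grind) (by grind) (by grind) (by grind)
      · rcases inv a ha hx with ⟨-, a', h5, h6, h7⟩ | h5
        · exact key a' b d (by grind) bd de' (by grind) (by grind) (by grind) (by grind)
        · exact key a b d ab bd de' (by grind) (by grind) (by grind) (by grind)
    · rcases lt_or_ge a c with ha | ha
      · rcases inv b hb (by omega) with ⟨-, a', h5, h6, h7⟩ | h5
        · exact key a a' d (by grind) (by grind) de' (by grind) (by grind) (by grind) (by grind)
        · exact key a b d ab bd de' (by grind) (by grind) (by grind) (by grind)
      · have hbm : b = m := by
          have := incr a b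
          grind
        have : p j ≤ p a := by
          have := incr j a
          have := small a
          grind
        exact key c j d cj (by grind) de' (by grind) (by grind) (by grind) (by grind)
  · have ha : a < c := by
      have := incr a b
      grind
    rcases lt_or_ge b c with hb | hb
    · rcases inv d hd (by omega) with ⟨-, a', h5, h6, h7⟩ | h5
      · exact key a b a' (by grind) (by grind) (by grind) (by grind) (by grind) (by grind) (by grind)
      · exact key a b d ab bd de' (by grind) (by grind) (by grind) (by grind)
    · have hdm : d = m := by
        have := incr b d
        grind
      have : p j ≤ p b := by
        have := incr j b
        have := small b
        grind
      exact key a c j (by grind) (by grind) (by grind) (by grind) (by grind) (by grind) (by grind)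

/-- The only new descent that could end before a value above `x` has `p j` as its bottom, in
position `c`. Its top is either above `x`, giving the same descent in `p`, or it starts a `3214` in `p`. -/
theorem hi_forward (hp : Function.Injective p) (h : Source x p c j m) (s : Shift p r c j m)
    (H1 : No3214 x p) (H : No2134 x p) : No2134 x r := by
  intro a b d e ab bd de h1 h2 h3
  by_contra! hx
  obtain ⟨cj, jm, top, desc, low, ⟨t, mt, xt⟩, incr, small⟩ := h
  obtain ⟨rc, rj, rm, rest⟩ := s
  have hd : r d = p d := by grind
  have he : r e = p e := by grind
  have key : ∀ a b, a < b → b < d → p b < p a → p a < p d → False := by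
    intro a b q1 q2 q3 q4
    have := H a b d e q1 q2 de q3 q4 (by omega)
    omega
  rcases lt_or_ge d c with hdc | hdc
  · exact key a b ab bd (by grind) (by grind)
  have hlow : ∀ b, c < b → b < d → x ≤ p b := by
    intro b q1 q2
    by_contra! q
    exact key c b q1 q2 (by grind) (by grind)
  have hdj : d < j := by
    by_contra! q
    have := hlow j cj
    grind
  have hac : a ≠ c := by
    rintro rfl
    have := hlow b ab bd
    grind
  by_cases hbc : b = c
  · by_cases hax : p a < x
    · have := H1 a j m t (by grind) jm mt desc (by grind) (by grind)
      omega
    · have hne : p a ≠ p c := fun e => hac (hp e)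
      exact key a b ab bd (by grind) (by grind)
  · exact key a b ab bd (by grind) (by grind)

theorem hi_backward (g : Target x r c j m) (s : Shift p r c j m)
    (H : No2134 x r) : No2134 x p := by
  intro a b d e ab bd de h1 h2 h3
  by_contra! hx
  obtain ⟨cj, jm, top, desc, low, ⟨t, mt, xt⟩, incr, large⟩ := g
  obtain ⟨rc, rj, rm, rest⟩ := s
  have hd : r d = p d := by grind
  have he : r e = p e := by grind
  have key : ∀ a b, a < b → b < d → r b < r a → r a < r d → False := by
    intro a b q1 q2 q3 q4
    have := H a b d e q1 q2 de q3 q4 (by omega)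
    omega
  rcases lt_or_ge d c with hdc | hdc
  · exact key a b ab bd (by grind) (by grind)
  have hdj : d < j := by
    by_contra! q
    exact key c j cj (by grind) (by grind) (by grind)
  have hlow : ∀ b, c < b → b < d → x ≤ r b := by
    intro b q1 q2
    by_contra! q
    have := incr b j q1 (by grind) jm q
    exact key c b q1 q2 (by grind) (by grind)
  have hac : a ≠ c := by
    rintro rfl
    have := hlow b ab bd
    grind
  by_cases hbc : b = c
  · exact key a b ab bd (by grind) (by grind)
  · exact key a b ab bd (by grind) (by grind)

/-! ### Lost and gained permutations have the two shapes -/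

theorem exists_source (hp : Function.Injective p) (h : Hybrid x m p) (h' : ¬ Hybrid x (m + 1) p) :
    ∃ c j, Source x p c j m := by
  obtain ⟨lo, hi, left, right⟩ := h
  have : ∃ c b t, c < b ∧ b < m ∧ m < t ∧ p m < p b ∧ p b < p c ∧ p c < p t ∧ p c = x := by
    by_contra! hcon
    refine h' ⟨lo, hi, ?_, ?_⟩
    · intro a b d e ab bd de h1 h2 h3 h4
      have := left a b d e ab bd de h1 h2 h3 h4
      have := hcon a b e ab
      grind
    · intro a b d e ab bd de h1 h2 h3 h4
      have := right a b d e ab bd de h1 h2 h3 h4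
      omega
  obtain ⟨c, b, t, cb, bm, mt, h1, h2, h3, h4⟩ := this
  have incr : ∀ a b, c < a → a < b → b < m → p a < x → p b < x → p a < p b := by
    intro a b ca ab bm ha hb
    by_contra! hle
    have hne : p b ≠ p a := fun e => by have := hp e; omega
    have := left c a b t ca ab (by omega) (by omega) (by omega) (by omega) h4
    omega
  -- `j` is the first position between `c` and `m` with a value between those of `m` and `c`.
  obtain ⟨j, ⟨cj, jm, j1, j2⟩, hmin⟩ := WellFounded.has_min (wellFounded_lt (α := Fin n))
    {a | c < a ∧ a < m ∧ p m < p a ∧ p a < x} ⟨b, cb, bm, h1, by omega⟩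
  refine ⟨c, j, cj, jm, h4, j1, j2, ⟨t, mt, by omega⟩, incr, ?_⟩
  intro a ca aj ax
  by_contra! hle
  have hne : p m ≠ p a := fun e => by have := hp e; omega
  exact hmin a ⟨ca, by omega, by omega, ax⟩ aj

theorem exists_target (hr : Function.Injective r) (h : Hybrid x (m + 1) r) (h' : ¬ Hybrid x m r) :
    ∃ c j, Target x r c j m := by
  obtain ⟨lo, hi, left, right⟩ := h
  have : ∃ a b t, a < b ∧ b < m ∧ m < t ∧ r b < r a ∧ r a < r m ∧ r m < r t ∧ r m = x := by
    by_contra! hcon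
    refine h' ⟨lo, hi, ?_, ?_⟩
    · intro a b d e ab bd de h1 h2 h3 h4
      have := left a b d e ab bd de h1 h2 h3 h4
      omega
    · intro a b d e ab bd de h1 h2 h3 h4
      have := right a b d e ab bd de h1 h2 h3 h4
      by_contra! hm
      obtain rfl : d = m := by omega
      exact hcon a b e ab bd de h1 h2 h3 h4
  obtain ⟨a, b, t, ab, bm, mt, h1, h2, h3, h4⟩ := this
  -- `c` is the last descent top below `x` before `m`, and `j` its last descent bottom.
  obtain ⟨c, ⟨cx, i, ci, im, hi⟩, hmax⟩ := WellFounded.has_min (wellFounded_gt (α := Fin n))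
    {a | r a < x ∧ ∃ i, a < i ∧ i < m ∧ r i < r a} ⟨a, by omega, b, ab, bm, h1⟩
  obtain ⟨j, ⟨cj, jm, hj⟩, hmaxj⟩ := WellFounded.has_min (wellFounded_gt (α := Fin n))
    {i | c < i ∧ i < m ∧ r i < r c} ⟨i, ci, im, hi⟩
  refine ⟨c, j, cj, jm, h4, hj, cx, ⟨t, mt, by omega⟩, ?_, ?_⟩
  · intro a b ca ab bm ha hb
    by_contra! hle
    have hne : r b ≠ r a := fun e => by have := hr e; omega
    exact hmax a ⟨ha, b, ab, bm, by omega⟩ ca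
  · intro a ja am ha
    by_contra! hle
    have hne : r c ≠ r a := fun e => by have := hr e; omega
    exact hmaxj a ⟨by omega, am, by omega⟩ ja

theorem Source.hybrid (h : Source x p c j m) (lo : No3214 x p) (hi : No2134 x p)
    (hp : Function.Injective p) : Hybrid x m p ∧ ¬ Hybrid x (m + 1) p := by
  obtain ⟨cj, jm, top, desc, low, ⟨t, mt, xt⟩, incr, small⟩ := h
  refine ⟨⟨lo, hi, ?_, ?_⟩, ?_⟩
  · intro a b d e ab bd de h1 h2 h3 h4
    obtain rfl := hp (h4.trans top.symm)
    by_contra! hd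
    have := incr b d ab bd (by omega)
    omega
  · intro a b d e ab bd de h1 h2 h3 h4
    obtain rfl := hp (h4.trans top.symm)
    omega
  · rintro ⟨-, -, left, -⟩
    have := left c j m t cj jm mt desc (by omega) (by omega) top
    omega

theorem Target.hybrid (h : Target x r c j m) (lo : No3214 x r) (hi : No2134 x r)
    (hr : Function.Injective r) : Hybrid x (m + 1) r ∧ ¬ Hybrid x m r := by
  obtain ⟨cj, jm, top, desc, low, ⟨t, mt, xt⟩, incr, large⟩ := h
  refine ⟨⟨lo, hi, ?_, ?_⟩, ?_⟩
  · intro a b d e ab bd de h1 h2 h3 h4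
    obtain rfl := hr (h4.trans top.symm)
    omega
  · intro a b d e ab bd de h1 h2 h3 h4
    obtain rfl := hr (h4.trans top.symm)
    omega
  · rintro ⟨-, -, -, right⟩
    have := right c j m t cj jm mt desc (by omega) (by omega) top
    omega

theorem Source.unique {c' j' : Fin n} (hp : Function.Injective p) (h : Source x p c j m)
    (h' : Source x p c' j' m) : c = c' ∧ j = j' := by
  obtain rfl : c = c' := hp (h.top.trans h'.top.symm)
  refine ⟨rfl, ?_⟩
  rcases lt_trichotomy j j' with q | q | q
  · have := h'.small j h.cj q h.low
    have := h.desc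
    omega
  · exact q
  · have := h.small j' h'.cj q h'.low
    have := h'.desc
    omega

theorem Target.not_lt {c' j' : Fin n} (h : Target x r c j m)
    (h' : Target x r c' j' m) : ¬ c < c' := by
  intro q
  have := h.incr c' j' q h'.cj h'.jm h'.low (h'.desc.trans h'.low)
  have := h'.desc
  omega

theorem Target.unique {c' j' : Fin n} (h : Target x r c j m)
    (h' : Target x r c' j' m) : c = c' ∧ j = j' := by
  obtain rfl : c = c' := le_antisymm (le_of_not_gt (h'.not_lt h)) (le_of_not_gt (h.not_lt h'))
  refine ⟨rfl, ?_⟩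
  rcases lt_trichotomy j j' with q | q | q
  · have := h.large j' q h'.jm (h'.desc.trans h'.low)
    have := h'.desc
    omega
  · exact q
  · have := h'.large j q h.jm (h.desc.trans h.low)
    have := h.desc
    omega

/-! ### Counting -/

/-- One-line notation of `π`, with values in `ℕ`. -/
def word (π : Equiv.Perm (Fin n)) : Fin n → ℕ := fun i => π i

theorem word_injective (π : Equiv.Perm (Fin n)) : Function.Injective (word π) :=
  Fin.val_injective.comp π.injective

/-- The 3-cycle `c ↦ j ↦ m ↦ c` of positions. -/
def cyc (c j m : Fin n) : Equiv.Perm (Fin n) := Equiv.swap c j * Equiv.swap j m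

theorem shift_cyc (π : Equiv.Perm (Fin n)) (cj : c < j) (jm : j < m) :
    Shift (word π) (word (π * cyc c j m)) c j m := by
  have cm := cj.trans jm
  constructor
  · simp [word, cyc, Equiv.swap_apply_of_ne_of_ne cj.ne cm.ne]
  · simp [word, cyc, Equiv.swap_apply_of_ne_of_ne cm.ne' jm.ne']
  · simp [word, cyc]
  · intro a hc hj hm
    simp [word, cyc, Equiv.swap_apply_of_ne_of_ne hj hm, Equiv.swap_apply_of_ne_of_ne hc hj]

theorem sign_cyc (π : Equiv.Perm (Fin n)) (cj : c < j) (jm : j < m) :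
    Equiv.Perm.sign (π * cyc c j m) = Equiv.Perm.sign π := by
  simp [cyc, Equiv.Perm.sign_swap cj.ne, Equiv.Perm.sign_swap jm.ne]

open Classical in
/-- The even permutations in the hybrid class. -/
noncomputable def hyb (n x m : ℕ) : Finset (Equiv.Perm (Fin n)) :=
  Finset.univ.filter fun π => Equiv.Perm.sign π = 1 ∧ Hybrid x m (word π)

open Classical in
theorem card_step (x : ℕ) (m : Fin n) : (hyb n x m).card = (hyb n x (m + 1)).card := by
  let P : Equiv.Perm (Fin n) → Prop := fun π =>
    Equiv.Perm.sign π = 1 ∧ No3214 x (word π) ∧ No2134 x (word π)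
  -- Permutations of either shape together with the positions `c`, `j` that witness it.
  let T : Finset (Equiv.Perm (Fin n) × Fin n × Fin n) :=
    Finset.univ.filter fun q => P q.1 ∧ Source x (word q.1) q.2.1 q.2.2 m
  let T' : Finset (Equiv.Perm (Fin n) × Fin n × Fin n) :=
    Finset.univ.filter fun q => P q.1 ∧ Target x (word q.1) q.2.1 q.2.2 m
  have e1 : T.card = (hyb n x m \ hyb n x (m + 1)).card := by
    refine Finset.card_bij (fun q _ => q.1) ?_ ?_ ?_
    · rintro ⟨π, c, j⟩ hq
      obtain ⟨⟨h0, h1, h2⟩, h3⟩ := (Finset.mem_filter.1 hq).2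
      have := h3.hybrid h1 h2 (word_injective π)
      simp only [hyb, Finset.mem_sdiff, Finset.mem_filter, Finset.mem_univ, true_and]
      exact ⟨⟨h0, this.1⟩, fun h => this.2 h.2⟩
    · rintro ⟨π, c, j⟩ hq ⟨π', c', j'⟩ hq' (rfl : π = π')
      obtain ⟨-, h3⟩ := (Finset.mem_filter.1 hq).2
      obtain ⟨-, h3'⟩ := (Finset.mem_filter.1 hq').2
      obtain ⟨rfl, rfl⟩ := h3.unique (word_injective π) h3'
      rfl
    · intro π hπ
      simp only [hyb, Finset.mem_sdiff, Finset.mem_filter, Finset.mem_univ, true_and] at hπ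
      obtain ⟨⟨h0, h1⟩, h2⟩ := hπ
      obtain ⟨c, j, h3⟩ := exists_source (word_injective π) h1 fun h => h2 ⟨h0, h⟩
      exact ⟨(π, c, j), Finset.mem_filter.2 ⟨Finset.mem_univ _, ⟨h0, h1.lo, h1.hi⟩, h3⟩, rfl⟩
  have e2 : T'.card = (hyb n x (m + 1) \ hyb n x m).card := by
    refine Finset.card_bij (fun q _ => q.1) ?_ ?_ ?_
    · rintro ⟨π, c, j⟩ hq
      obtain ⟨⟨h0, h1, h2⟩, h3⟩ := (Finset.mem_filter.1 hq).2
      have := h3.hybrid h1 h2 (word_injective π)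
      simp only [hyb, Finset.mem_sdiff, Finset.mem_filter, Finset.mem_univ, true_and]
      exact ⟨⟨h0, this.1⟩, fun h => this.2 h.2⟩
    · rintro ⟨π, c, j⟩ hq ⟨π', c', j'⟩ hq' (rfl : π = π')
      obtain ⟨-, h3⟩ := (Finset.mem_filter.1 hq).2
      obtain ⟨-, h3'⟩ := (Finset.mem_filter.1 hq').2
      obtain ⟨rfl, rfl⟩ := h3.unique h3'
      rfl
    · intro π hπ
      simp only [hyb, Finset.mem_sdiff, Finset.mem_filter, Finset.mem_univ, true_and] at hπ
      obtain ⟨⟨h0, h1⟩, h2⟩ := hπ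
      obtain ⟨c, j, h3⟩ := exists_target (word_injective π) h1 fun h => h2 ⟨h0, h⟩
      exact ⟨(π, c, j), Finset.mem_filter.2 ⟨Finset.mem_univ _, ⟨h0, h1.lo, h1.hi⟩, h3⟩, rfl⟩
  have e3 : T.card = T'.card := by
    refine Finset.card_bij' (fun q _ => (q.1 * cyc q.2.1 q.2.2 m, q.2))
      (fun q _ => (q.1 * (cyc q.2.1 q.2.2 m)⁻¹, q.2)) ?_ ?_ ?_ ?_
    · rintro ⟨π, c, j⟩ hq
      obtain ⟨⟨h0, h1, h2⟩, h3⟩ := (Finset.mem_filter.1 hq).2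
      have s := shift_cyc π h3.cj h3.jm
      have h4 := h3.target s
      exact Finset.mem_filter.2 ⟨Finset.mem_univ _,
        ⟨(sign_cyc π h3.cj h3.jm).trans h0, lo_forward h3 h4 s h1, hi_forward (word_injective π) h3 s h1 h2⟩, h4⟩
    · rintro ⟨ρ, c, j⟩ hq
      obtain ⟨⟨h0, h1, h2⟩, h3⟩ := (Finset.mem_filter.1 hq).2
      simp only at h0 h1 h2 h3
      obtain ⟨π, rfl⟩ : ∃ π, ρ = π * cyc c j m := ⟨ρ * (cyc c j m)⁻¹, by simp⟩
      have s := shift_cyc π h3.cj h3.jm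
      have h4 := h3.source s
      simp only [mul_inv_cancel_right]
      exact Finset.mem_filter.2 ⟨Finset.mem_univ _,
        ⟨(sign_cyc π h3.cj h3.jm).symm.trans h0, lo_backward h4 h3 s h1, hi_backward h3 s h2⟩, h4⟩
    · rintro ⟨π, c, j⟩ _
      simp
    · rintro ⟨π, c, j⟩ _
      simp
  have e4 := Finset.card_sdiff_add_card_inter (hyb n x m) (hyb n x (m + 1))
  have e5 := Finset.card_sdiff_add_card_inter (hyb n x (m + 1)) (hyb n x m)
  rw [Finset.inter_comm] at e5
  omega

theorem card_row (x m : ℕ) (hm : m ≤ n) : (hyb n x 0).card = (hyb n x m).card := by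
  induction m with
  | zero => rfl
  | succ m ih => exact (ih (by omega)).trans (card_step x ⟨m, hm⟩)

theorem hyb_succ (x : ℕ) : hyb n x n = hyb n (x + 1) 0 := by
  ext π
  simp only [hyb, Finset.mem_filter, Finset.mem_univ, true_and]
  refine and_congr_right fun _ => ⟨?_, ?_⟩
  · rintro ⟨lo, hi, left, right⟩
    refine ⟨?_, ?_, ?_, ?_⟩
    · intro a b c d ab bc cd h1 h2 h3
      have := lo a b c d ab bc cd h1 h2 h3
      have := left a b c d ab bc cd h1 h2 h3
      have := c.isLt
      omega
    · intro a b c d ab bc cd h1 h2 h3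
      have := hi a b c d ab bc cd h1 h2 h3
      omega
    · intros; omega
    · intro a b c d ab bc cd h1 h2 h3 h4
      have := hi a b c d ab bc cd h1 h2 h3
      omega
  · rintro ⟨lo, hi, left, right⟩
    refine ⟨?_, ?_, ?_, ?_⟩
    · intro a b c d ab bc cd h1 h2 h3
      have := lo a b c d ab bc cd h1 h2 h3
      omega
    · intro a b c d ab bc cd h1 h2 h3
      have := hi a b c d ab bc cd h1 h2 h3
      have := right a b c d ab bc cd h1 h2 h3
      omega
    · intro a b c d ab bc cd h1 h2 h3 h4
      have := lo a b c d ab bc cd h1 h2 h3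
      omega
    · intros; omega

theorem card_all (x : ℕ) : (hyb n 0 0).card = (hyb n x 0).card := by
  induction x with
  | zero => rfl
  | succ x ih => rw [ih, card_row x n le_rfl, hyb_succ]

/-! ### Patterns and reverse-complement -/

theorem contains_p3214 (π : Equiv.Perm (Fin n)) : Pattern.Contains p3214 π ↔
    ∃ a b c d, a < b ∧ b < c ∧ c < d ∧ word π c < word π b ∧ word π b < word π a ∧
      word π a < word π d := by
  constructor
  · rintro ⟨f, hf, h⟩
    exact ⟨f 0, f 1, f 2, f 3, hf (by decide), hf (by decide), hf (by decide),
      (h 2 1).2 (by decide), (h 1 0).2 (by decide), (h 0 3).2 (by decide)⟩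
  · rintro ⟨a, b, c, d, ab, bc, cd, h1, h2, h3⟩
    refine ⟨![a, b, c, d], ?_, ?_⟩
    · rw [Fin.strictMono_iff_lt_succ]
      intro i
      fin_cases i <;> assumption
    · simp only [word] at h1 h2 h3
      intro i j
      fin_cases i <;> fin_cases j <;> simp [p3214] <;> omega

theorem contains_p2134 (π : Equiv.Perm (Fin n)) : Pattern.Contains p2134 π ↔
    ∃ a b c d, a < b ∧ b < c ∧ c < d ∧ word π b < word π a ∧ word π a < word π c ∧
      word π c < word π d := by
  constructor
  · rintro ⟨f, hf, h⟩
    exact ⟨f 0, f 1, f 2, f 3, hf (by decide), hf (by decide), hf (by decide),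
      (h 1 0).2 (by decide), (h 0 2).2 (by decide), (h 2 3).2 (by decide)⟩
  · rintro ⟨a, b, c, d, ab, bc, cd, h1, h2, h3⟩
    refine ⟨![a, b, c, d], ?_, ?_⟩
    · rw [Fin.strictMono_iff_lt_succ]
      intro i
      fin_cases i <;> assumption
    · simp only [word] at h1 h2 h3
      intro i j
      fin_cases i <;> fin_cases j <;> simp [p2134] <;> omega

theorem hybrid_zero (π : Equiv.Perm (Fin n)) :
    Hybrid 0 0 (word π) ↔ Pattern.Avoids p2134 π := by
  rw [Pattern.Avoids, contains_p2134]
  constructor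
  · rintro ⟨-, hi, -, -⟩ ⟨a, b, c, d, ab, bc, cd, h1, h2, h3⟩
    have := hi a b c d ab bc cd h1 h2 h3
    omega
  · intro h
    have h' : ∀ a b c d, a < b → b < c → c < d → word π b < word π a → word π a < word π c →
      word π c < word π d → False :=
      fun a b c d ab bc cd h1 h2 h3 => h ⟨a, b, c, d, ab, bc, cd, h1, h2, h3⟩
    exact ⟨fun _ _ _ _ _ _ _ _ _ _ => Nat.zero_le _,
      fun a b c d ab bc cd h1 h2 h3 => (h' a b c d ab bc cd h1 h2 h3).elim,
      fun _ _ _ _ _ _ _ _ _ _ _ => Nat.zero_le _,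
      fun a b c d ab bc cd h1 h2 h3 => (h' a b c d ab bc cd h1 h2 h3).elim⟩

theorem hybrid_top (π : Equiv.Perm (Fin n)) :
    Hybrid n 0 (word π) ↔ Pattern.Avoids p3214 π := by
  have hlt : ∀ i, word π i < n := fun i => (π i).isLt
  rw [Pattern.Avoids, contains_p3214]
  constructor
  · rintro ⟨lo, -, -, -⟩ ⟨a, b, c, d, ab, bc, cd, h1, h2, h3⟩
    have := lo a b c d ab bc cd h1 h2 h3
    have := hlt a
    omega
  · intro h
    exact ⟨fun a b c d ab bc cd h1 h2 h3 => (h ⟨a, b, c, d, ab, bc, cd, h1, h2, h3⟩).elim,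
      fun _ _ c _ _ _ _ _ _ _ => (hlt c).le,
      fun _ _ _ _ _ _ _ _ _ _ _ => Nat.zero_le _,
      fun _ _ c _ _ _ _ _ _ _ e => absurd e (hlt c).ne⟩

theorem eav_2134_eq_3214 (n : ℕ) : eav n p2134 = eav n p3214 := by
  classical
  have h1 : eav n p2134 = (hyb n 0 0).card := by
    simp only [eav, hyb, hybrid_zero]
    rw [Nat.card_eq_fintype_card, Fintype.card_subtype]
  have h2 : eav n p3214 = (hyb n n 0).card := by
    simp only [eav, hyb, hybrid_top]
    rw [Nat.card_eq_fintype_card, Fintype.card_subtype]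
  rw [h1, h2, card_all]

/-- The reverse-complement of a permutation, as conjugation by the reversal. -/
def revComp (π : Equiv.Perm (Fin n)) : Equiv.Perm (Fin n) := Fin.revPerm * π * Fin.revPerm

theorem revComp_revComp (π : Equiv.Perm (Fin n)) : revComp (revComp π) = π := by
  ext i
  simp [revComp]

theorem sign_revComp (π : Equiv.Perm (Fin n)) :
    Equiv.Perm.sign (revComp π) = Equiv.Perm.sign π := by
  simp only [revComp, Equiv.Perm.sign_mul]
  rw [mul_right_comm, Int.units_mul_self, one_mul]

theorem Contains.revComp {k : ℕ} {σ : Equiv.Perm (Fin k)} {π : Equiv.Perm (Fin n)}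
    (h : Pattern.Contains σ π) : Pattern.Contains (revComp σ) (revComp π) := by
  obtain ⟨f, hf, h⟩ := h
  refine ⟨fun i => (f i.rev).rev, fun i j hij => ?_, fun a b => ?_⟩
  · simpa using hf (Fin.rev_lt_rev.2 hij)
  · simpa [EvenWilf.revComp] using h b.rev a.rev

theorem eav_revComp {k : ℕ} (σ : Equiv.Perm (Fin k)) (n : ℕ) : eav n σ = eav n (revComp σ) := by
  have key : ∀ π : Equiv.Perm (Fin n),
      Pattern.Contains σ π ↔ Pattern.Contains (revComp σ) (revComp π) := fun π =>
    ⟨Contains.revComp, fun h => by simpa [revComp_revComp] using Contains.revComp h⟩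
  refine Nat.card_congr (Equiv.subtypeEquiv ⟨revComp, revComp, revComp_revComp, revComp_revComp⟩ ?_)
  intro π
  simp only [Equiv.coe_fn_mk, sign_revComp, Pattern.Avoids, key]

end EvenWilf

/-- The patterns 3214, 1432, 2134, 1243 are pairwise even-Wilf-equivalent. -/
theorem stmt11 :
    (∀ n : ℕ, eav n p3214 = eav n p1432) ∧
      (∀ n : ℕ, eav n p3214 = eav n p2134) ∧
      (∀ n : ℕ, eav n p3214 = eav n p1243) ∧
      (∀ n : ℕ, eav n p1432 = eav n p2134) ∧
      (∀ n : ℕ, eav n p1432 = eav n p1243) ∧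
      (∀ n : ℕ, eav n p2134 = eav n p1243) := by
  have h1 : ∀ n : ℕ, eav n p3214 = eav n p1432 := fun n => by
    rw [EvenWilf.eav_revComp, show EvenWilf.revComp p3214 = p1432 by decide]
  have h2 : ∀ n : ℕ, eav n p3214 = eav n p2134 := fun n => (EvenWilf.eav_2134_eq_3214 n).symm
  have h3 : ∀ n : ℕ, eav n p2134 = eav n p1243 := fun n => by
    rw [EvenWilf.eav_revComp, show EvenWilf.revComp p2134 = p1243 by decide]
  exact ⟨h1, h2, fun n => (h2 n).trans (h3 n), fun n => (h1 n).symm.trans (h2 n),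
    fun n => (h1 n).symm.trans ((h2 n).trans (h3 n)), h3⟩
end

section
/- The patterns 3421, 4312, 4123, and 2341 are pairwise even-Wilf-equivalent: for all n ≥ 0, eav_n(3421) = eav_n(4312) = eav_n(4123) = eav_n(2341). -/
/-- The pattern `3421` (one-line notation, 1-indexed). -/
def p3421 : Equiv.Perm (Fin 4) :=
  ⟨![2,3,1,0], ![3,2,0,1], by decide, by decide⟩

/-- The pattern `4312` (one-line notation, 1-indexed). -/
def p4312 : Equiv.Perm (Fin 4) :=
  ⟨![3,2,0,1], ![2,3,1,0], by decide, by decide⟩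

/-- The pattern `4123` (one-line notation, 1-indexed). -/
def p4123 : Equiv.Perm (Fin 4) :=
  ⟨![3,0,1,2], ![1,2,3,0], by decide, by decide⟩

/-- The pattern `2341` (one-line notation, 1-indexed). -/
def p2341 : Equiv.Perm (Fin 4) :=
  ⟨![1,2,3,0], ![3,0,1,2], by decide, by decide⟩

open Polynomial

/-! ### Continuants -/

/-- The continuant of `m` columns with link weights `e`: the sum, over all ways of packing disjoint
dominoes `{v, v + 1}` into `{0, …, m - 1}`, of the product of the weights `e v` of the dominoes. -/
noncomputable def cont (e : ℕ → ℤ[X]) : ℕ → ℤ[X]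
  | 0 => 1
  | 1 => 1
  | m + 2 => cont e (m + 1) + e m * cont e m

/-- The weight `s ^ v * X` of an unbroken link between `v` and `v + 1`. Here `s = ±1` records whether
permutations are counted with their sign, and `X` is a formal variable. -/
noncomputable def fullLink (s : ℤ) (v : ℕ) : ℤ[X] := C (s ^ v) * X

open Classical in
/-- The link weights of a state `ε`, where `ε v` says that `v` and `v + 1` are linked. -/
noncomputable def link (s : ℤ) (ε : ℕ → Prop) (v : ℕ) : ℤ[X] := if ε v then fullLink s v else 0

theorem cont_congr {e f : ℕ → ℤ[X]} : ∀ (m : ℕ), (∀ v, v + 1 < m → e v = f v) → cont e m = cont f m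
  | 0, _ => rfl
  | 1, _ => rfl
  | m + 2, h => by
    rw [cont, cont, cont_congr (m + 1) fun v hv => h v (by omega),
      cont_congr m fun v hv => h v (by omega), h m (by omega)]

theorem cont_const {e : ℕ → ℤ[X]} {h : ℕ} (he : ∀ v, h ≤ v + 1 → e v = 0) {m : ℕ} (hm : h ≤ m) :
    cont e m = cont e h := by
  induction m, hm using Nat.le_induction with
  | base => rfl
  | succ m hm ih =>
    rw [← ih]
    cases m with
    | zero => rfl
    | succ m => rw [cont, he m hm, zero_mul, add_zero]

theorem coeff_zero_cont {e : ℕ → ℤ[X]} (he : ∀ v, (e v).coeff 0 = 0) : ∀ m, (cont e m).coeff 0 = 1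
  | 0 => by simp [cont]
  | 1 => by simp [cont]
  | m + 2 => by rw [cont, coeff_add, coeff_zero_cont he, mul_coeff_zero, he]; simp

theorem coeff_zero_fullLink (s : ℤ) (v : ℕ) : (fullLink s v).coeff 0 = 0 := by simp [fullLink]

theorem coeff_zero_link (s : ℤ) (ε : ℕ → Prop) (v : ℕ) : (link s ε v).coeff 0 = 0 := by
  unfold link; split_ifs <;> simp [fullLink]

theorem fullLink_add_two {s : ℤ} (hs : s ^ 2 = 1) (v : ℕ) : fullLink s (v + 2) = fullLink s v := by
  simp [fullLink, pow_add, hs]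

/-- The state `ε` on `{0, …, h - 1}` after the value `x < h` has been used up and the larger values
have been shifted down by one: links below `x` survive, the values that were on either side of `x`
are not linked, and all values that were above `x` become linked to one another. -/
def delLinks (ε : ℕ → Prop) (h x : ℕ) (v : ℕ) : Prop := (v + 1 < x ∧ ε v) ∨ (x ≤ v ∧ v + 2 < h)

open Classical in
/-- A continuant is affine in each link weight, and the slope in the weight of the link `x` is a
product of two continuants. Here all links from `x + 1` on are unbroken, and the `2`-periodicity of
`fullLink` lets this product be written as a single continuant, for weights `e'` broken at `x - 1`. -/
theorem cont_sub {s : ℤ} (hs : s ^ 2 = 1) (e e' : ℕ → ℤ[X]) (x : ℕ)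
    (h1 : ∀ v, v + 1 < x → e' v = e v) (h2 : ∀ v, v + 1 = x → e' v = 0)
    (h3 : ∀ v, x ≤ v → e' v = fullLink s v) : ∀ j,
    cont (fun v => if v < x then e v else fullLink s v) (x + 2 + j)
      - cont (fun v => if v < x + 1 then e v else fullLink s v) (x + 2 + j)
      = (fullLink s x - e x) * cont e' (x + j)
  | 0 => by
    have a1 : cont (fun v => if v < x then e v else fullLink s v) (x + 1) = cont e (x + 1) :=
      cont_congr _ fun v hv => if_pos (by omega)
    have a2 : cont (fun v => if v < x + 1 then e v else fullLink s v) (x + 1) = cont e (x + 1) :=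
      cont_congr _ fun v hv => if_pos (by omega)
    have a3 : cont (fun v => if v < x then e v else fullLink s v) x = cont e x :=
      cont_congr _ fun v hv => if_pos (by omega)
    have a4 : cont (fun v => if v < x + 1 then e v else fullLink s v) x = cont e x :=
      cont_congr _ fun v hv => if_pos (by omega)
    have a5 : cont e' x = cont e x := cont_congr _ fun v hv => h1 v hv
    simp only [add_zero, cont, a1, a2, a3, a4, a5, lt_irrefl, if_false, Nat.lt_succ_self, if_true]
    ring
  | 1 => by
    have ih := cont_sub hs e e' x h1 h2 h3 0
    have a1 : cont (fun v => if v < x then e v else fullLink s v) (x + 1) = cont e (x + 1) :=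
      cont_congr _ fun v hv => if_pos (by omega)
    have a2 : cont (fun v => if v < x + 1 then e v else fullLink s v) (x + 1) = cont e (x + 1) :=
      cont_congr _ fun v hv => if_pos (by omega)
    have a3 : cont e' (x + 1) = cont e' x := by
      cases x with
      | zero => rfl
      | succ y => rw [cont, h2 y rfl, zero_mul, add_zero]
    have w : ∀ f : ℕ → ℤ[X],
        cont f (x + 2 + 1) = cont f (x + 2) + f (x + 1) * cont f (x + 1) := fun _ => rfl
    rw [w, w, a1, a2, a3, if_neg (by omega), if_neg (by omega)]
    simp only [add_zero] at ih
    linear_combination ih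
  | j + 2 => by
    have i0 := cont_sub hs e e' x h1 h2 h3 j
    have i1 := cont_sub hs e e' x h1 h2 h3 (j + 1)
    rw [show x + 2 + (j + 2) = (x + 2 + j) + 2 from by ring, show x + (j + 2) = (x + j) + 2 from rfl,
      cont, cont, cont, if_neg (by omega), if_neg (by omega), h3 _ (by omega),
      show x + 2 + j = x + j + 2 from by ring, fullLink_add_two hs]
    rw [show x + 2 + (j + 1) = x + j + 2 + 1 from by ring, show x + (j + 1) = x + j + 1 from rfl] at i1
    rw [show x + 2 + j = x + j + 2 from by ring] at i0
    linear_combination i1 + fullLink s (x + j) * i0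

open Classical in
/-- The effect, on continuants, of using up one of the values below `h` in the count of
`4123`-avoiders. It depends on `ε` only through the continuant of `ε`. -/
theorem sum_delLinks {s : ℤ} (hs : s ^ 2 = 1) {ε : ℕ → Prop} {h : ℕ} (hε : ∀ v, h ≤ v + 1 → ¬ ε v) :
    X * ∑ x ∈ Finset.range h with ¬ ε x, s ^ x • cont (link s (delLinks ε h x)) (h - 1)
      = cont (fullLink s) (h + 1) - cont (link s ε) h := by
  -- Breaking the links of `ε` one after the other makes the sum telescope.
  have key : ∀ x ∈ Finset.range h,
      cont (fun v => if v < x then link s ε v else fullLink s v) (h + 1)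
      - cont (fun v => if v < x + 1 then link s ε v else fullLink s v) (h + 1)
      = X * if ¬ ε x then s ^ x • cont (link s (delLinks ε h x)) (h - 1) else 0 := by
    intro x hx
    have hx := Finset.mem_range.1 hx
    set e' : ℕ → ℤ[X] := fun v => if v + 1 < x then link s ε v else if v + 1 = x then 0
      else fullLink s v with he'
    have := cont_sub hs (link s ε) e' x (fun v hv => if_pos hv)
      (fun v hv => by rw [he']; simp [hv]) (fun v hv => by
        rw [he']; simp only; rw [if_neg (by omega), if_neg (by omega)]) (h - 1 - x)
    rw [show x + 2 + (h - 1 - x) = h + 1 by omega, show x + (h - 1 - x) = h - 1 by omega] at this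
    rw [this]
    have hc : cont (link s (delLinks ε h x)) (h - 1) = cont e' (h - 1) := by
      refine cont_congr _ fun v hv => ?_
      simp only [he', link, delLinks]
      by_cases c1 : v + 1 < x
      · have : ¬ x ≤ v := by omega
        simp [c1, this]
      · by_cases c2 : v + 1 = x
        · have : ¬ x ≤ v := by omega
          simp [c2, this]
        · have : x ≤ v := by omega
          have h3 : v + 2 < h := by omega
          simp [c1, c2, this, h3]
    rw [hc]
    by_cases hex : ε x
    · simp [link, hex]
    · simp only [link, hex, if_false, not_false_eq_true, if_true, fullLink, zsmul_eq_mul]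
      simp; ring
  rw [Finset.sum_filter, Finset.mul_sum, ← Finset.sum_congr rfl key, Finset.sum_range_sub']
  congr 1
  rw [← cont_const (e := link s ε) (h := h) (fun v hv => by simp [link, hε v hv]) (Nat.le_succ h)]
  exact cont_congr _ fun v hv => if_pos (by omega)

/-- The effect, on continuants, of using up one of the values below `h` in the count of
`4312`-avoiders; the right-hand side has the same form as in `sum_delLinks`. -/
theorem sum_hook (s : ℤ) (h p : ℕ) (hp : p ≤ h) :
    X * ∑ x ∈ Finset.range h with p ≤ x + 1, s ^ x • cont (fullLink s) x
      = cont (fullLink s) (h + 1) - cont (fullLink s) p := by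
  induction h, hp using Nat.le_induction with
  | base =>
    cases p with
    | zero => simp [cont]
    | succ p =>
      rw [show (Finset.range (p + 1)).filter (fun x => p + 1 ≤ x + 1) = {p} by
        ext a; simp; omega]
      simp [cont, fullLink]; ring
  | succ h hp ih =>
    rw [Finset.sum_filter] at ih ⊢
    rw [Finset.sum_range_succ, mul_add, ih, if_pos (by omega)]
    simp [cont, fullLink]; ring

/-- The linear map sending `P` to `(P(0) * K - P) / X`, where `K` is the unbroken continuant of
`h + 1` columns. By `sum_delLinks` and `sum_hook` it describes, for both patterns, how the continuant
of a state changes when one of the values below `h` is used up. -/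
noncomputable def step (s : ℤ) (h : ℕ) : ℤ[X] →ₗ[ℤ] ℤ[X] where
  toFun P := divX (C (P.coeff 0) * cont (fullLink s) (h + 1) - P)
  map_add' P Q := by
    rw [← divX_add]; congr 1; simp; ring
  map_smul' c P := by
    ext n; simp [coeff_divX, mul_assoc, mul_sub]

theorem step_eq {s : ℤ} {h : ℕ} {P Q : ℤ[X]} (h0 : P.coeff 0 = 1)
    (hQ : X * Q = cont (fullLink s) (h + 1) - P) : step s h P = Q := by
  change divX _ = Q
  rw [h0, map_one, one_mul, ← hQ]
  ext n; rw [coeff_divX, coeff_X_mul]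

/-- The common value of the two counting problems: `val s n h P` is the (signed) number of ways to
continue with `n` remaining entries, of which the values below `h` are already exposed, when the state
has continuant `P`. -/
noncomputable def val (s : ℤ) : ℕ → ℕ → (ℤ[X] →ₗ[ℤ] ℤ)
  | 0, _ => lcoeff ℤ 0
  | n + 1, h => ∑ x ∈ Finset.range (n + 1) with h ≤ x, s ^ x • val s n x
      + (val s n (h - 1)).comp (step s h)

/-! ### Peeling off the first entry of a permutation -/

/-- The increasing enumeration of the natural numbers different from `x`. -/
def skip (x a : ℕ) : ℕ := if a < x then a else a + 1

/-- The permutation with first entry `x` whose remaining entries are in the same relative order as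
those of `ρ`. -/
def consPerm {n : ℕ} (x : Fin (n + 1)) (ρ : Equiv.Perm (Fin n)) : Equiv.Perm (Fin (n + 1)) :=
  x.cycleRange.symm * Equiv.Perm.decomposeFin.symm (0, ρ)

theorem consPerm_zero {n : ℕ} (x : Fin (n + 1)) (ρ : Equiv.Perm (Fin n)) : consPerm x ρ 0 = x := by
  simp [consPerm]

theorem consPerm_succ {n : ℕ} (x : Fin (n + 1)) (ρ : Equiv.Perm (Fin n)) (j : Fin n) :
    consPerm x ρ j.succ = x.succAbove (ρ j) := by
  simp [consPerm]

theorem coe_consPerm_succ {n : ℕ} (x : Fin (n + 1)) (ρ : Equiv.Perm (Fin n)) (j : Fin n) :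
    (consPerm x ρ j.succ : ℕ) = skip x (ρ j) := by
  rw [consPerm_succ, skip, Fin.succAbove]
  simp only [Fin.lt_def, Fin.val_castSucc]
  split_ifs <;> simp

theorem sign_consPerm {n : ℕ} (x : Fin (n + 1)) (ρ : Equiv.Perm (Fin n)) :
    Equiv.Perm.sign (consPerm x ρ) = (-1) ^ (x : ℕ) * Equiv.Perm.sign ρ := by
  simp [consPerm, Equiv.Perm.decomposeFin.symm_sign]

theorem consPerm_bijective (n : ℕ) :
    Function.Bijective fun q : Fin (n + 1) × Equiv.Perm (Fin n) => consPerm q.1 q.2 := by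
  rw [Fintype.bijective_iff_injective_and_card]
  refine ⟨?_, ?_⟩
  · rintro ⟨x, ρ⟩ ⟨y, τ⟩ h
    simp only at h
    have hxy : x = y := by rw [← consPerm_zero x ρ, h, consPerm_zero]
    subst hxy
    refine Prod.ext rfl (Equiv.ext fun j => ?_)
    have := congrArg (fun π => π j.succ) h
    simpa [consPerm_succ] using this
  · simp [Fintype.card_perm, Nat.factorial_succ]

open Classical in
/-- The sum of `sign π ^ k` over the permutations `π` of `Fin n` whose word of entries satisfies
`Q`. -/
noncomputable def signSum (k n : ℕ) (Q : (Fin n → ℕ) → Prop) : ℤ :=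
  ∑ π : Equiv.Perm (Fin n), if Q (fun i => (π i : ℕ)) then ((Equiv.Perm.sign π : ℤˣ) : ℤ) ^ k else 0

open Classical in
/-- Splitting `signSum` according to the first entry `x`, which takes part in `x` inversions. Here
`c x` says that `x` is an admissible first entry and `R x` is the condition left on the rest. -/
theorem signSum_succ (k n : ℕ) (Q : (Fin (n + 1) → ℕ) → Prop) (c : ℕ → Prop)
    (R : ℕ → (Fin n → ℕ) → Prop)
    (h : ∀ (x : ℕ) (ρ : Equiv.Perm (Fin n)), x ≤ n →
      (Q (Fin.cons x fun j => skip x (ρ j)) ↔ c x ∧ R x fun i => (ρ i : ℕ))) :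
    signSum k (n + 1) Q =
      ∑ x ∈ Finset.range (n + 1) with c x, ((-1) ^ k) ^ x * signSum k n (R x) := by
  have key : ∀ (x : Fin (n + 1)) (ρ : Equiv.Perm (Fin n)),
      (fun i => (consPerm x ρ i : ℕ)) = Fin.cons (x : ℕ) fun j => skip x (ρ j) := by
    intro x ρ
    funext i
    refine Fin.cases ?_ (fun j => ?_) i
    · rw [consPerm_zero]; rfl
    · rw [coe_consPerm_succ]; rfl
  rw [Finset.sum_filter, Finset.sum_range, signSum,
    ← (consPerm_bijective n).sum_comp, Fintype.sum_prod_type]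
  refine Finset.sum_congr rfl fun x _ => ?_
  simp only [key, sign_consPerm, h x _ (Nat.lt_succ_iff.1 x.2)]
  by_cases hc : c x
  · simp only [hc, true_and, if_true, signSum, Finset.mul_sum]
    refine Finset.sum_congr rfl fun ρ _ => ?_
    split_ifs
    · push_cast
      rw [mul_pow, ← pow_mul, ← pow_mul, mul_comm k]
    · simp
  · simp [hc]

/-! ### States of the two scanning processes -/

/-- The words that can complete a `4123`-avoiding permutation: they avoid `4123`; their entries below
`h`, which are smaller than some earlier entry, avoid `123`; and their entries in a block of values
below `h` connected by the links `ε` are decreasing, there being an earlier `1` for a `123`. -/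
def Good4123 (h : ℕ) (ε : ℕ → Prop) {n : ℕ} (u : Fin n → ℕ) : Prop :=
  (∀ i j k l, i < j → j < k → k < l → u j < u k → u k < u l → ¬ u l < u i) ∧
  (∀ i j k, i < j → j < k → u i < u j → u j < u k → ¬ u k < h) ∧
  (∀ i j, i < j → u i < u j → u j < h → ∃ v, u i ≤ v ∧ v < u j ∧ ¬ ε v)

/-- The words that can complete a `4312`-avoiding permutation: they avoid `4312`; their entries below
`h`, which are smaller than some earlier entry, avoid `312`; and their entries below `p` are
decreasing, there being an earlier `3` for a `312`. -/
def Good4312 (h p : ℕ) {n : ℕ} (u : Fin n → ℕ) : Prop :=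
  (∀ i j k l, i < j → j < k → k < l → u k < u l → u l < u j → ¬ u j < u i) ∧
  (∀ i j k, i < j → j < k → u j < u k → u k < u i → ¬ u i < h) ∧
  (∀ i j, i < j → u i < u j → ¬ u j < p)

/-! ### The effect of the first entry on a state -/

theorem skip_lt_skip {x a b : ℕ} : skip x a < skip x b ↔ a < b := by
  unfold skip; split_ifs <;> omega

theorem skip_lt {x a : ℕ} : skip x a < x ↔ a < x := by
  unfold skip; split_ifs <;> omega

theorem lt_skip {x a : ℕ} : x < skip x a ↔ x ≤ a := by
  unfold skip; split_ifs <;> omega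

theorem skip_lt_of_lt {x h a : ℕ} (hx : x < h) : skip x a < h ↔ a < h - 1 := by
  unfold skip; split_ifs <;> omega

theorem skip_lt_of_ge {x h a : ℕ} (hx : h ≤ x) : skip x a < h ↔ a < h := by
  unfold skip; split_ifs <;> omega

theorem good4312_cons_ge {n h p x : ℕ} (hx : h ≤ x) (hp : p ≤ h) (u : Fin n → ℕ) :
    Good4312 h p (Fin.cons x fun j => skip x (u j) : Fin (n + 1) → ℕ) ↔ Good4312 x p u := by
  unfold Good4312
  simp only [Fin.forall_fin_succ, Fin.cons_zero, Fin.cons_succ, Fin.succ_lt_succ_iff, Fin.succ_pos,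
    Fin.not_lt_zero, skip_lt_skip, skip_lt, lt_skip, true_implies, false_implies,
    implies_true, true_and, skip_lt_of_ge (hp.trans hx), skip_lt_of_ge hx]
  refine ⟨fun ⟨⟨a1, a2⟩, _, _, a3⟩ => ⟨a2, a1, a3⟩, fun ⟨a2, a1, a3⟩ => ⟨⟨a1, a2⟩, ⟨?_, ?_⟩, ?_, a3⟩⟩
  · intros; omega
  · intro i j k hij hjk h1 h2 h3
    exact a1 i j k hij hjk h1 h2 (by omega)
  · intros; omega

theorem good4312_cons_lt {n h p x : ℕ} (hx : x < h) (hp : p ≤ h) (hn : h ≤ n + 1)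
    (ρ : Equiv.Perm (Fin n)) :
    Good4312 h p (Fin.cons x fun j => skip x (ρ j) : Fin (n + 1) → ℕ) ↔
      p ≤ x + 1 ∧ Good4312 (h - 1) x fun j => (ρ j : ℕ) := by
  unfold Good4312
  simp only [Fin.forall_fin_succ, Fin.cons_zero, Fin.cons_succ, Fin.succ_lt_succ_iff, Fin.succ_pos,
    Fin.not_lt_zero, skip_lt_skip, skip_lt, lt_skip, true_implies, false_implies,
    implies_true, true_and, skip_lt_of_lt hx]
  have e1 : ∀ {a}, p ≤ x + 1 → skip x a < p → a < x := by
    intro a; unfold skip; split_ifs <;> omega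
  constructor
  · rintro ⟨⟨-, a2⟩, ⟨a3, a4⟩, a5, -⟩
    refine ⟨?_, a2, a4, fun i j hij h1 h2 => a3 i j hij h1 h2 hx⟩
    by_contra! hpx
    -- the value `x + 1 < p` occurs after the first entry `x`
    have := a5 (ρ.symm ⟨x, by omega⟩)
    simp only [Equiv.apply_symm_apply, skip] at this
    simp at this
    omega
  · rintro ⟨hpx, a2, a4, a5⟩
    refine ⟨⟨fun i j k hij hjk h1 h2 h3 => a4 i j k hij hjk h1 h2 (by omega), a2⟩,
      ⟨fun i j hij h1 h2 _ => a5 i j hij h1 h2, a4⟩, fun i h1 h2 => ?_,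
      fun i j hij h1 h2 => a5 i j hij h1 (e1 hpx h2)⟩
    have := e1 hpx h2
    omega

theorem good4123_cons_ge {n h x : ℕ} {ε : ℕ → Prop} (hε : ∀ v, h ≤ v + 1 → ¬ ε v) (hx : h ≤ x)
    (u : Fin n → ℕ) :
    Good4123 h ε (Fin.cons x fun j => skip x (u j) : Fin (n + 1) → ℕ) ↔ Good4123 x ε u := by
  unfold Good4123
  simp only [Fin.forall_fin_succ, Fin.cons_zero, Fin.cons_succ, Fin.succ_lt_succ_iff, Fin.succ_pos,
    Fin.not_lt_zero, skip_lt_skip, skip_lt, lt_skip, true_implies, false_implies,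
    implies_true, true_and, skip_lt_of_ge hx]
  have e1 : ∀ {a}, a < h → skip x a = a := fun ha => if_pos (by omega)
  constructor
  · rintro ⟨⟨a1, a2⟩, -, -, a3⟩
    refine ⟨a2, a1, fun i j hij h1 h2 => ?_⟩
    by_cases hj : u j < h
    · have := a3 i j hij h1 hj
      rwa [e1 hj, e1 (h1.trans hj)] at this
    · exact ⟨u j - 1, by omega, by omega, hε _ (by omega)⟩
  · rintro ⟨a2, a1, a3⟩
    refine ⟨⟨a1, a2⟩, ⟨?_, ?_⟩, ?_, ?_⟩
    · intros; omega
    · intro i j k hij hjk h1 h2 h3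
      exact a1 i j k hij hjk h1 h2 (by omega)
    · intros; omega
    · intro i j hij h1 h2
      rw [e1 h2, e1 (h1.trans h2)]
      exact a3 i j hij h1 (by omega)

theorem good4123_cons_lt {n h x : ℕ} {ε : ℕ → Prop} (hε : ∀ v, h ≤ v + 1 → ¬ ε v) (hx : x < h)
    (hn : h ≤ n + 1) (ρ : Equiv.Perm (Fin n)) :
    Good4123 h ε (Fin.cons x fun j => skip x (ρ j) : Fin (n + 1) → ℕ) ↔
      ¬ ε x ∧ Good4123 (h - 1) (delLinks ε h x) fun j => (ρ j : ℕ) := by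
  unfold Good4123
  simp only [Fin.forall_fin_succ, Fin.cons_zero, Fin.cons_succ, Fin.succ_lt_succ_iff, Fin.succ_pos,
    Fin.not_lt_zero, skip_lt_skip, skip_lt, lt_skip, true_implies, false_implies,
    implies_true, true_and, skip_lt_of_lt hx]
  have e1 : ∀ {a}, a < x → skip x a = a := fun ha => if_pos ha
  have e2 : ∀ {a}, x ≤ a → skip x a = a + 1 := fun ha => if_neg (by omega)
  constructor
  · rintro ⟨⟨-, a2⟩, ⟨a3, a4⟩, a5, a6⟩
    refine ⟨fun hex => ?_, a2, a4, fun i j hij h1 h2 => ?_⟩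
    · have hxh : x + 1 < h := by
        by_contra hc
        exact hε x (by omega) hex
      -- the value `x + 1` occurs after the first entry `x`
      have := a5 (ρ.symm ⟨x, by omega⟩)
      simp only [Equiv.apply_symm_apply] at this
      obtain ⟨v, hv1, hv2, hv3⟩ := this le_rfl (by omega)
      rw [e2 le_rfl] at hv2
      exact hv3 ((show v = x by omega) ▸ hex)
    · rcases lt_or_ge (ρ j : ℕ) x with hj | hj
      · obtain ⟨v, hv1, hv2, hv3⟩ := a6 i j hij h1 h2
        rw [e1 hj] at hv2
        rw [e1 (h1.trans hj)] at hv1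
        exact ⟨v, hv1, hv2, by unfold delLinks; rintro (h | h) <;> [exact hv3 h.2; omega]⟩
      · rcases lt_or_ge (ρ i : ℕ) x with hi | hi
        · exact ⟨x - 1, by omega, by omega, by unfold delLinks; omega⟩
        · exact absurd h2 (a3 i j hij hi h1)
  · rintro ⟨hex, a2, a4, a6⟩
    refine ⟨⟨fun i j k hij hjk h1 h2 h3 => a4 i j k hij hjk h1 h2 (by omega), a2⟩,
      ⟨fun i j hij h1 h2 h3 => ?_, a4⟩, fun i h1 h2 => ⟨x, le_rfl, by rw [e2 h1]; omega, hex⟩,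
      fun i j hij h1 h2 => ?_⟩
    · obtain ⟨v, hv1, hv2, hv3⟩ := a6 i j hij h2 h3
      exact hv3 (Or.inr ⟨by omega, by omega⟩)
    · obtain ⟨v, hv1, hv2, hv3⟩ := a6 i j hij h1 h2
      rcases lt_or_ge (ρ j : ℕ) x with hj | hj
      · exact ⟨v, by rwa [e1 (h1.trans hj)], by rwa [e1 hj], fun h => hv3 (Or.inl ⟨by omega, h⟩)⟩
      · rcases lt_or_ge (ρ i : ℕ) x with hi | hi
        · exact ⟨x, by rw [e1 hi]; omega, by rw [e2 hj]; omega, hex⟩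
        · exact absurd (Or.inr ⟨by omega, by omega⟩) hv3

/-! ### The two recursions -/

open Classical in
theorem signSum_good4123 (k : ℕ) : ∀ (n h : ℕ) (ε : ℕ → Prop), h ≤ n → (∀ v, h ≤ v + 1 → ¬ ε v) →
    signSum k n (Good4123 h ε) = val ((-1) ^ k) n h (cont (link ((-1) ^ k) ε) h)
  | 0, h, ε, hn, _ => by
    obtain rfl : h = 0 := by omega
    simp [signSum, Good4123, val, cont]
  | n + 1, h, ε, hn, hε => by
    have hs : ((-1 : ℤ) ^ k) ^ 2 = 1 := by rw [← pow_mul, mul_comm, pow_mul]; simp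
    set s : ℤ := (-1) ^ k with hsdef
    rw [signSum_succ k n _ (fun x => h ≤ x ∨ ¬ ε x)
      (fun x => if h ≤ x then Good4123 x ε else Good4123 (h - 1) (delLinks ε h x))]
    · rw [← hsdef, ← Finset.sum_filter_add_sum_filter_not _ (fun x => h ≤ x)]
      have hstep : step s h (cont (link s ε) h)
          = ∑ x ∈ Finset.range h with ¬ ε x, s ^ x • cont (link s (delLinks ε h x)) (h - 1) :=
        step_eq (coeff_zero_cont (coeff_zero_link s ε) h) (sum_delLinks hs hε)
      rw [val, LinearMap.add_apply, LinearMap.comp_apply, hstep, map_sum, LinearMap.sum_apply]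
      congr 1
      · rw [Finset.filter_filter]
        refine Finset.sum_congr (by ext x; simp; tauto) fun x hx => ?_
        simp only [Finset.mem_filter, Finset.mem_range] at hx
        rw [if_pos hx.2, signSum_good4123 k n x ε (by omega) fun v hv => hε v (by omega),
          LinearMap.smul_apply, smul_eq_mul,
          cont_const (h := h) (fun v hv => by simp [link, hε v hv]) hx.2]
      · rw [Finset.filter_filter]
        refine Finset.sum_congr ?_ fun x hx => ?_
        · ext x
          simp only [Finset.mem_filter, Finset.mem_range]
          exact ⟨fun ⟨_, a, b⟩ => ⟨by omega, a.resolve_left b⟩,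
            fun ⟨a, b⟩ => ⟨by omega, Or.inr b, by omega⟩⟩
        simp only [Finset.mem_filter, Finset.mem_range] at hx
        rw [if_neg (by omega), signSum_good4123 k n (h - 1) _ (by omega) fun v hv => by
          unfold delLinks; omega, map_smul, smul_eq_mul]
    · intro x ρ hx
      rcases lt_or_ge x h with hxh | hxh
      · rw [if_neg (by omega), good4123_cons_lt hε hxh hn]
        simp [hxh]
      · rw [if_pos hxh, good4123_cons_ge hε hxh]
        simp [hxh]

open Classical in
theorem signSum_good4312 (k : ℕ) : ∀ (n h p : ℕ), h ≤ n → p ≤ h →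
    signSum k n (Good4312 h p) = val ((-1) ^ k) n h (cont (fullLink ((-1) ^ k)) p)
  | 0, h, p, hn, hp => by
    obtain rfl : h = 0 := by omega
    obtain rfl : p = 0 := by omega
    simp [signSum, Good4312, val, cont]
  | n + 1, h, p, hn, hp => by
    set s : ℤ := (-1) ^ k with hsdef
    rw [signSum_succ k n _ (fun x => h ≤ x ∨ p ≤ x + 1)
      (fun x => if h ≤ x then Good4312 x p else Good4312 (h - 1) x)]
    · rw [← hsdef, ← Finset.sum_filter_add_sum_filter_not _ (fun x => h ≤ x)]
      have hstep : step s h (cont (fullLink s) p)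
          = ∑ x ∈ Finset.range h with p ≤ x + 1, s ^ x • cont (fullLink s) x :=
        step_eq (coeff_zero_cont (coeff_zero_fullLink s) p) (sum_hook s h p hp)
      rw [val, LinearMap.add_apply, LinearMap.comp_apply, hstep, map_sum, LinearMap.sum_apply]
      congr 1
      · rw [Finset.filter_filter]
        refine Finset.sum_congr (by ext x; simp; tauto) fun x hx => ?_
        simp only [Finset.mem_filter, Finset.mem_range] at hx
        rw [if_pos hx.2, signSum_good4312 k n x p (by omega) (by omega),
          LinearMap.smul_apply, smul_eq_mul]
      · rw [Finset.filter_filter]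
        refine Finset.sum_congr (by ext x; simp; omega) fun x hx => ?_
        simp only [Finset.mem_filter, Finset.mem_range] at hx
        rw [if_neg (by omega), signSum_good4312 k n (h - 1) x (by omega) (by omega),
          map_smul, smul_eq_mul]
    · intro x ρ hx
      rcases lt_or_ge x h with hxh | hxh
      · rw [if_neg (by omega), good4312_cons_lt hxh hp hn]
        simp [hxh]
      · rw [if_pos hxh, good4312_cons_ge hxh hp]
        simp [hxh]

/-! ### From signed sums to even permutations -/

theorem good4123_zero_iff {n : ℕ} (π : Equiv.Perm (Fin n)) :
    Good4123 0 (fun _ => False) (fun i => (π i : ℕ)) ↔ Pattern.Avoids p4123 π := by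
  simp only [Good4123, Pattern.Avoids, Pattern.Contains]
  constructor
  · rintro ⟨h, -⟩ ⟨f, hf, hc⟩
    refine h (f 0) (f 1) (f 2) (f 3) (hf (by decide)) (hf (by decide)) (hf (by decide))
      ((hc 1 2).2 (by decide)) ((hc 2 3).2 (by decide)) ((hc 3 0).2 (by decide))
  · intro h
    refine ⟨fun i j k l hij hjk hkl h1 h2 h3 => h ⟨![i, j, k, l], ?_, ?_⟩, by simp, by simp⟩
    · rw [Fin.strictMono_iff_lt_succ]
      intro a; fin_cases a <;> simpa
    · rw [← Fin.lt_def] at h1 h2 h3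
      intro a b
      fin_cases a <;> fin_cases b <;> simp [p4123] <;> order

theorem good4312_zero_iff {n : ℕ} (π : Equiv.Perm (Fin n)) :
    Good4312 0 0 (fun i => (π i : ℕ)) ↔ Pattern.Avoids p4312 π := by
  simp only [Good4312, Pattern.Avoids, Pattern.Contains]
  constructor
  · rintro ⟨h, -⟩ ⟨f, hf, hc⟩
    refine h (f 0) (f 1) (f 2) (f 3) (hf (by decide)) (hf (by decide)) (hf (by decide))
      ((hc 2 3).2 (by decide)) ((hc 3 1).2 (by decide)) ((hc 1 0).2 (by decide))
  · intro h
    refine ⟨fun i j k l hij hjk hkl h1 h2 h3 => h ⟨![i, j, k, l], ?_, ?_⟩, by simp, by simp⟩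
    · rw [Fin.strictMono_iff_lt_succ]
      intro a; fin_cases a <;> simpa
    · rw [← Fin.lt_def] at h1 h2 h3
      intro a b
      fin_cases a <;> fin_cases b <;> simp [p4312] <;> order

open Classical in
/-- For an even `π` the sum `sign π ^ 0 + sign π ^ 1` is `2`, and for an odd `π` it is `0`; so the two
sums over the avoiders determine the number of even avoiders. -/
theorem two_mul_eav {m n : ℕ} {σ : Equiv.Perm (Fin m)} {Q : (Fin n → ℕ) → Prop}
    (hQ : ∀ π : Equiv.Perm (Fin n), Q (fun i => (π i : ℕ)) ↔ Pattern.Avoids σ π) :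
    2 * (eav n σ : ℤ) = signSum 0 n Q + signSum 1 n Q := by
  rw [eav, Nat.card_eq_fintype_card, Fintype.card_subtype, signSum, signSum,
    ← Finset.sum_add_distrib, Finset.card_filter, Nat.cast_sum, Finset.mul_sum]
  refine Finset.sum_congr rfl fun π _ => ?_
  have := hQ π
  rcases Int.units_eq_one_or (Equiv.Perm.sign π) with hs | hs <;>
    by_cases ha : Pattern.Avoids σ π <;> simp [hs, ha, this]

theorem eav_4312_eq_4123 (n : ℕ) : eav n p4312 = eav n p4123 := by
  have hk : ∀ k, signSum k n (Good4312 0 0) = signSum k n (Good4123 0 fun _ => False) := fun k => by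
    rw [signSum_good4312 k n 0 0 n.zero_le le_rfl,
      signSum_good4123 k n 0 _ n.zero_le fun _ _ h => h]
    -- both sides are now `val _ n 0 1`
    rfl
  have h1 := two_mul_eav (good4312_zero_iff (n := n))
  have h2 := two_mul_eav (good4123_zero_iff (n := n))
  rw [hk, hk] at h1
  omega

theorem contains_inv {m n : ℕ} {σ : Equiv.Perm (Fin m)} {π : Equiv.Perm (Fin n)}
    (h : Pattern.Contains σ π) : Pattern.Contains σ⁻¹ π⁻¹ := by
  obtain ⟨f, hf, hc⟩ := h
  refine ⟨fun a => π (f (σ⁻¹ a)), fun a b hab => ?_, fun a b => ?_⟩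
  · simpa [hc] using hab
  · simp [hf.lt_iff_lt]

theorem avoids_inv {m n : ℕ} {σ : Equiv.Perm (Fin m)} {π : Equiv.Perm (Fin n)} :
    Pattern.Avoids σ⁻¹ π⁻¹ ↔ Pattern.Avoids σ π :=
  not_congr ⟨fun h => by simpa using contains_inv h, contains_inv⟩

theorem eav_inv {m : ℕ} (n : ℕ) (σ : Equiv.Perm (Fin m)) : eav n σ⁻¹ = eav n σ := by
  refine (Nat.card_congr ((Equiv.inv (Equiv.Perm (Fin n))).subtypeEquiv fun π => ?_)).symm
  simp [avoids_inv]

/-- The patterns 3421, 4312, 4123, 2341 are pairwise even-Wilf-equivalent. -/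
theorem stmt12 :
    (∀ n : ℕ, eav n p3421 = eav n p4312) ∧
      (∀ n : ℕ, eav n p3421 = eav n p4123) ∧
      (∀ n : ℕ, eav n p3421 = eav n p2341) ∧
      (∀ n : ℕ, eav n p4312 = eav n p4123) ∧
      (∀ n : ℕ, eav n p4312 = eav n p2341) ∧
      (∀ n : ℕ, eav n p4123 = eav n p2341) := by
  have h1 : ∀ n, eav n p3421 = eav n p4312 := fun n =>
    (congrArg (eav n) (show p3421 = p4312⁻¹ from Equiv.ext fun _ => rfl)).trans (eav_inv n p4312)
  have h2 : ∀ n, eav n p2341 = eav n p4123 := fun n =>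
    (congrArg (eav n) (show p2341 = p4123⁻¹ from Equiv.ext fun _ => rfl)).trans (eav_inv n p4123)
  have h3 := eav_4312_eq_4123
  refine ⟨fun n => ?_, fun n => ?_, fun n => ?_, fun n => ?_, fun n => ?_, fun n => ?_⟩ <;>
    simp only [h1, h2, h3]
end
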